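/- arXiv:1903.03923 — 4 statements merged into one kernel-verified Lean document; each statement's English description precedes it below -/
import Mathlib

section
/- Let n = 2^e · p_1^{e_1} ⋯ p_r^{e_r} with p_1 < ⋯ < p_r distinct odd primes, e ≥ 0 and e_i ≥ 1 integers, and let k be a positive integer and a ∈ (ℤ/nℤ)^×. Then the Dickson polynomial D_k(x, a) of the first kind is a permutation polynomial on ℤ/nℤ (i.e., the evaluation map u ↦ D_k(u, a) is a bijection of ℤ/nℤ) if and only if gcd(k, w(n)) = 1. -/
open Polynomial

namespace DicksonAux

lemma eval_one {R : Type*} [CommRing R] (a y z : R) (h : y * z = a) (k : ℕ) :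
    eval (y + z) (dickson 1 a k) = y ^ k + z ^ k := by
  subst h
  induction k using Nat.twoStepInduction with
  | zero => simp; norm_num
  | one => simp
  | more n h0 h1 =>
    rw [dickson_add_two]
    simp only [eval_sub, eval_mul, eval_X, eval_C, h0, h1]
    ring

lemma eval_two {R : Type*} [CommRing R] (a y z : R) (h : y * z = a) (k : ℕ) :
    (y - z) * eval (y + z) (dickson 2 a k) = y ^ (k + 1) - z ^ (k + 1) := by
  subst h
  induction k using Nat.twoStepInduction with
  | zero => simp; norm_num
  | one => simp; ring
  | more n h0 h1 =>
    rw [dickson_add_two]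
    simp only [eval_sub, eval_mul, eval_X, eval_C]
    linear_combination (y + z) * h1 - y * z * h0

lemma eval_two_same {R : Type*} [CommRing R] (y : R) (k : ℕ) :
    eval (y + y) (dickson 2 (y * y) k) = (k + 1) * y ^ k := by
  induction k using Nat.twoStepInduction with
  | zero => simp; norm_num
  | one => simp; ring
  | more n h0 h1 =>
    rw [dickson_add_two]
    simp only [eval_sub, eval_mul, eval_X, eval_C, h0, h1]
    push_cast
    ring

lemma one_eq_two {R : Type*} [CommRing R] (a : R) (k : ℕ) :
    dickson 1 a (k + 2) = dickson 2 a (k + 2) - C a * dickson 2 a k := by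
  induction k using Nat.twoStepInduction with
  | zero => simp [dickson_two]; ring
  | one =>
    rw [dickson_add_two, dickson_add_two 2]
    simp [dickson_two]; ring
  | more n h0 h1 =>
    rw [dickson_add_two 1, dickson_add_two 2 a (n+2), h1, h0]
    have e1 := dickson_add_two 2 a (n+1)
    have e2 := dickson_add_two 2 a n
    linear_combination (C a) * e2

lemma deriv_one {R : Type*} [CommRing R] (a : R) (k : ℕ) :
    derivative (dickson 1 a (k + 1)) = (k + 1 : R[X]) * dickson 2 a k := by
  induction k using Nat.twoStepInduction with
  | zero => simp; norm_num
  | one => simp [dickson_two]; ring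
  | more n h0 h1 =>
    rw [dickson_add_two 1 a (n+1)]
    simp only [derivative_sub, derivative_mul, derivative_X, derivative_C, h0]
    rw [show n + 1 + 1 = (n+1)+1 from rfl, h1, one_eq_two, dickson_add_two 2 a n]
    push_cast
    ring

lemma mem_prime {p : ℕ} [Fact p.Prime] {K : Type*} [Field K] [Algebra (ZMod p) K] (x : K)
    (hx : x ^ p = x) : ∃ c : ZMod p, algebraMap (ZMod p) K c = x := by
  have := FiniteField.X_pow_card_sub_X_natDegree_eq K (Fact.out : p.Prime).one_lt
  classical
  have hne : (X ^ p - X : K[X]) ≠ 0 := FiniteField.X_pow_card_sub_X_ne_zero K (Fact.out : p.Prime).one_lt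
  have hsub : (Finset.univ.image (algebraMap (ZMod p) K)) ⊆ (X ^ p - X : K[X]).roots.toFinset := by
    intro y hy
    simp only [Finset.mem_image, Finset.mem_univ, true_and] at hy
    obtain ⟨c, rfl⟩ := hy
    simp [hne, ← map_pow, ZMod.pow_card]
  have hcard : (X ^ p - X : K[X]).roots.toFinset.card ≤ (Finset.univ.image (algebraMap (ZMod p) K)).card := by
    rw [Finset.card_image_of_injective _ (algebraMap (ZMod p) K).injective, Finset.card_univ, ZMod.card]
    exact (Multiset.toFinset_card_le _).trans ((card_roots' _).trans this.le)
  have heq := Finset.eq_of_subset_of_card_le hsub hcard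
  have : x ∈ (X ^ p - X : K[X]).roots.toFinset := by
    simp [hne, hx, sub_eq_zero]
  rw [← heq] at this
  simpa using this

lemma pow_inj {K : Type*} [Field K] {u v : K} {k m : ℕ} (hu : u ^ m = 1) (hv : v ^ m = 1)
    (h : u ^ k = v ^ k) (hm : m ≠ 0) (hc : Nat.Coprime k m) : u = v := by
  have hv0 : v ≠ 0 := by rintro rfl; simp [hm] at hv
  have h1 : (u / v) ^ m = 1 := by rw [div_pow, hu, hv]; simp
  have h2 : (u / v) ^ k = 1 := by rw [div_pow, h, div_self (pow_ne_zero _ hv0)]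
  have h3 := pow_gcd_eq_one.2 ⟨h2, h1⟩
  rw [hc, pow_one] at h3
  exact (div_eq_one_iff_eq hv0).1 h3

section field
variable {p : ℕ} [Fact p.Prime] {K : Type*} [Field K] [Algebra (ZMod p) K]

lemma frob_root {x a : ZMod p} {y z : K} (hs : y + z = algebraMap _ K x)
    (hm : y * z = algebraMap _ K a) (ha : a ≠ 0) : y ^ (p ^ 2 - 1) = 1 := by
  have hp : p.Prime := Fact.out
  have : CharP K p := charP_of_injective_algebraMap (algebraMap (ZMod p) K).injective p
  have ha' : algebraMap (ZMod p) K a ≠ 0 := by simpa using ha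
  have hy : y ≠ 0 := by rintro rfl; simp at hm; exact ha' hm.symm
  have hz : z ≠ 0 := by rintro rfl; simp at hm; exact ha' hm.symm
  have e1 : y ^ p + z ^ p = y + z := by
    rw [← add_pow_char, hs, ← map_pow, ZMod.pow_card]
  have e2 : y ^ p * z ^ p = y * z := by
    rw [← mul_pow, hm, ← map_pow, ZMod.pow_card]
  have e3 : (y ^ p - y) * (y ^ p - z) = 0 := by
    linear_combination y ^ p * e1 - e2
  have e4 : (y ^ p) ^ p = y := by
    rcases mul_eq_zero.1 e3 with h | h
    · rw [sub_eq_zero.1 h, sub_eq_zero.1 h]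
    · rw [sub_eq_zero.1 h]
      rw [sub_eq_zero.1 h] at e1
      linear_combination e1
  apply mul_right_cancel₀ hy
  rw [← pow_succ, Nat.sub_add_cancel (Nat.one_le_pow _ _ hp.pos), sq, pow_mul, e4, one_mul]

lemma exists_root [IsAlgClosed K] (x a : K) : ∃ y z : K, y + z = x ∧ y * z = a := by
  have : ∃ y, eval y (X ^ 2 - C x * X + C a : K[X]) = 0 := by
    apply IsAlgClosed.exists_root
    have : (X ^ 2 - C x * X + C a : K[X]).degree = 2 := by compute_degree!
    rw [this]; norm_num
  obtain ⟨y, hy⟩ := this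
  refine ⟨y, x - y, by ring, ?_⟩
  simp at hy
  linear_combination -hy

lemma eval_map (a x : ZMod p) (j : ℕ) (k : ℕ) :
    algebraMap (ZMod p) K (eval x (dickson j a k)) =
      eval (algebraMap _ K x) (dickson j (algebraMap _ K a) k) := by
  rw [← map_dickson, eval_map_algebraMap, aeval_algebraMap_apply, coe_aeval_eq_eval]
end field

lemma p2 {p : ℕ} (hp : p.Prime) : p ^ 2 - 1 ≠ 0 := by
  have := hp.two_le
  have : 2 ^ 2 ≤ p ^ 2 := Nat.pow_le_pow_left this 2
  omega

lemma inj_of_coprime {p : ℕ} [Fact p.Prime] {a : ZMod p} (ha : a ≠ 0) {k : ℕ}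
    (hc : Nat.Coprime k (p ^ 2 - 1)) :
    Function.Injective (fun x => eval x (dickson 1 a k)) := by
  have hp : p.Prime := Fact.out
  intro x1 x2 h
  simp only at h
  let K := AlgebraicClosure (ZMod p)
  apply (algebraMap (ZMod p) K).injective
  have h' := congrArg (algebraMap (ZMod p) K) h
  rw [eval_map, eval_map] at h'
  obtain ⟨y, z, hs, hm⟩ := exists_root (algebraMap (ZMod p) K x1) (algebraMap (ZMod p) K a)
  obtain ⟨u, v, hs', hm'⟩ := exists_root (algebraMap (ZMod p) K x2) (algebraMap (ZMod p) K a)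
  have fy := frob_root hs hm ha
  have fu := frob_root hs' hm' ha
  have fv := frob_root ((add_comm _ _).trans hs') ((mul_comm _ _).trans hm') ha
  rw [← hs, ← hs', eval_one _ _ _ hm, eval_one _ _ _ hm'] at h'
  have hmk : y ^ k * z ^ k = u ^ k * v ^ k := by rw [← mul_pow, ← mul_pow, hm, hm']
  have : (y ^ k - u ^ k) * (y ^ k - v ^ k) = 0 := by
    linear_combination y ^ k * h' - hmk
  have hu : u ≠ 0 := by rintro rfl; simp [p2 hp] at fu
  have hv : v ≠ 0 := by rintro rfl; simp [p2 hp] at fv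
  rw [← hs, ← hs']
  rcases mul_eq_zero.1 this with h | h
  · have e := pow_inj fy fu (sub_eq_zero.1 h) (p2 hp) hc
    subst e
    rw [mul_left_cancel₀ hu (hm.trans hm'.symm)]
  · have e := pow_inj fy fv (sub_eq_zero.1 h) (p2 hp) hc
    subst e
    rw [mul_left_cancel₀ hv (hm.trans (hm'.symm.trans (mul_comm _ _))), add_comm]

lemma deriv_ne_of_coprime {p : ℕ} [Fact p.Prime] {a : ZMod p} (ha : a ≠ 0) {k : ℕ}
    (hc : Nat.Coprime k (p ^ 2 - 1)) (hk : ¬ p ∣ k) (x : ZMod p) :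
    eval x (derivative (dickson 1 a k)) ≠ 0 := by
  have hp : p.Prime := Fact.out
  obtain _ | k := k
  · simp at hk
  have hk' : ((k : ZMod p) + 1) ≠ 0 := by
    intro h; apply hk; rw [← ZMod.natCast_eq_zero_iff]; exact_mod_cast h
  rw [deriv_one]
  simp only [eval_mul, eval_add, eval_natCast, eval_one]
  simp only [Polynomial.eval_one]
  refine mul_ne_zero hk' fun h => ?_
  let K := AlgebraicClosure (ZMod p)
  have h' := congrArg (algebraMap (ZMod p) K) h
  rw [eval_map, map_zero] at h'
  obtain ⟨y, z, hs, hm⟩ := exists_root (algebraMap (ZMod p) K x) (algebraMap (ZMod p) K a)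
  have fy := frob_root hs hm ha
  have fz := frob_root ((add_comm _ _).trans hs) ((mul_comm _ _).trans hm) ha
  have hy : y ≠ 0 := by rintro rfl; simp [p2 hp] at fy
  have h2 := eval_two _ _ _ hm k
  rw [hs, h', mul_zero] at h2
  have e := pow_inj fy fz (sub_eq_zero.1 h2.symm) (p2 hp) hc
  subst e
  rw [← hs, ← hm, eval_two_same] at h'
  refine mul_ne_zero ?_ (pow_ne_zero _ hy) h'
  have := (map_ne_zero (algebraMap (ZMod p) K)).2 hk'
  simpa using this

lemma coprime_of_inj {p : ℕ} [Fact p.Prime] (K : Type*) [Field K] [Algebra (ZMod p) K]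
    [IsAlgClosed K] {a : ZMod p} (ha : a ≠ 0) {k : ℕ}
    (hi : Function.Injective (fun x => eval x (dickson 1 a k))) :
    Nat.Coprime k (p ^ 2 - 1) := by
  have hp : p.Prime := Fact.out
  by_contra hcon
  obtain ⟨q, hq, hqk, hqp⟩ := Nat.Prime.not_coprime_iff_dvd.1 hcon
  have : CharP K p := charP_of_injective_algebraMap (algebraMap (ZMod p) K).injective p
  have ha' : algebraMap (ZMod p) K a ≠ 0 := by simpa using ha
  have hqp' : q ≠ p := by
    rintro rfl
    have h1 : q ∣ q ^ 2 - (q ^ 2 - 1) := Nat.dvd_sub (dvd_pow_self _ two_ne_zero) hqp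
    have : q ^ 2 - (q ^ 2 - 1) = 1 := by have := p2 hp; omega
    rw [this] at h1
    exact hq.one_lt.ne' (Nat.dvd_one.1 h1)
  have key : ∀ y z y' z' : K, y * z = algebraMap _ K a → y' * z' = algebraMap _ K a →
      (y + z) ^ p = y + z → (y' + z') ^ p = y' + z' → y ^ k = y' ^ k → y + z = y' + z' := by
    intro y z y' z' hm hm' hf hf' hk
    obtain ⟨c, hc⟩ := mem_prime _ hf
    obtain ⟨c', hc'⟩ := mem_prime _ hf'
    rw [← hc, ← hc']
    congr 1
    apply hi
    apply (algebraMap (ZMod p) K).injective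
    simp only
    rw [eval_map, eval_map, hc, hc', eval_one _ _ _ hm, eval_one _ _ _ hm', hk]
    congr 1
    have hy : y' ≠ 0 := by rintro rfl; simp at hm'; exact ha' hm'.symm
    apply mul_left_cancel₀ (pow_ne_zero k hy)
    rw [← hk, ← mul_pow, hm, hk, ← mul_pow, hm']
  obtain ⟨m, rfl⟩ := hqk
  rcases hq.eq_two_or_odd' with rfl | hodd
  · obtain ⟨y, z, hs, hm⟩ := exists_root (1 : K) (algebraMap (ZMod p) K a)
    have h2 : (2 : K) ≠ 0 := by
      intro h
      have : ((2 : ℕ) : K) = 0 := by exact_mod_cast h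
      rw [CharP.cast_eq_zero_iff K p] at this
      exact hqp' ((Nat.prime_dvd_prime_iff_eq hp hq).1 this).symm
    have hpo : Odd p := hp.odd_of_ne_two (Ne.symm hqp')
    have := key y z (-y) (-z) hm (by simpa using hm) (by rw [hs]; simp)
      (by rw [← neg_add, hs, hpo.neg_one_pow]) (by rw [pow_mul, pow_mul]; simp)
    apply h2
    linear_combination this - 2 * hs
  ·
    have : NeZero (q : K) := ⟨by
      intro h
      rw [CharP.cast_eq_zero_iff K p] at h
      exact hqp' ((Nat.prime_dvd_prime_iff_eq hp hq).1 h).symm⟩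
    obtain ⟨ζ, hζ⟩ : ∃ ζ : K, IsPrimitiveRoot ζ q := HasEnoughRootsOfUnity.exists_primitiveRoot K q
    have hζ0 : ζ ≠ 0 := hζ.ne_zero hq.ne_zero
    have hζ1 : ζ ≠ 1 := hζ.ne_one hq.one_lt
    have hζ2 : ζ ^ 2 ≠ 1 := by
      intro h
      have := hζ.dvd_of_pow_eq_one 2 h
      rw [Nat.prime_dvd_prime_iff_eq hq Nat.prime_two] at this
      subst this
      exact absurd hodd (by decide)
    have hζk : ζ ^ (q * m) = 1 := by rw [pow_mul, hζ.pow_eq_one, one_pow]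
    have fin : ∀ y z : K, y * z = algebraMap _ K a → (y + z) ^ p = y + z →
        (ζ * y + ζ⁻¹ * z) ^ p = ζ * y + ζ⁻¹ * z →
        (ζ * (ζ * y) + ζ⁻¹ * (ζ⁻¹ * z)) ^ p = ζ * (ζ * y) + ζ⁻¹ * (ζ⁻¹ * z) → False := by
      intro y z hm h1 h2 h3
      have hm2 : (ζ * y) * (ζ⁻¹ * z) = algebraMap _ K a := by rw [← hm]; field_simp
      have hm3 : (ζ * (ζ * y)) * (ζ⁻¹ * (ζ⁻¹ * z)) = algebraMap _ K a := by rw [← hm]; field_simp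
      have k1 := key _ _ _ _ hm hm2 h1 h2 (by rw [mul_pow, hζk, one_mul])
      have k2 := key _ _ _ _ hm2 hm3 h2 h3 (by rw [mul_pow ζ (ζ * y), hζk, one_mul])
      have hy : y ≠ 0 := by rintro rfl; simp at hm; exact ha' hm.symm
      have hz : z ≠ 0 := by rintro rfl; simp at hm; exact ha' hm.symm
      have hζm : ζ - 1 ≠ 0 := sub_ne_zero.2 hζ1
      have k1' : ζ * y = z := by
        field_simp at k1
        apply mul_left_cancel₀ hζm
        linear_combination -k1
      have k2' : ζ ^ 3 * y = z := by
        field_simp at k2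
        apply mul_left_cancel₀ hζm
        linear_combination -k2
      apply hζ2
      apply mul_left_cancel₀ (mul_ne_zero hζ0 hy)
      linear_combination k2' - k1'
    have hfac : p ^ 2 - 1 = (p + 1) * (p - 1) := by
      have := Nat.sq_sub_sq p 1
      simpa using this
    rw [hfac, hq.dvd_mul] at hqp
    rcases hqp with h | h
    · have hζp : ζ ^ p = ζ⁻¹ := by
        apply eq_inv_of_mul_eq_one_left
        rw [← pow_succ]
        exact (hζ.pow_eq_one_iff_dvd _).2 h
      obtain ⟨y, hy⟩ := IsAlgClosed.exists_pow_nat_eq (algebraMap (ZMod p) K a) (Nat.succ_pos p)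
      have hy' : (y ^ p) ^ p = y := by
        have e1 : (y ^ p * y) ^ p = y ^ p * y := by
          rw [← pow_succ, hy, ← map_pow, ZMod.pow_card]
        rw [mul_pow] at e1
        have hy0 : y ≠ 0 := by
          rintro rfl; simp at hy; exact ha' hy.symm
        apply mul_right_cancel₀ (pow_ne_zero p hy0)
        rw [e1, mul_comm]
      refine fin y (y ^ p) (by rw [← hy, pow_succ, mul_comm]) ?_ ?_ ?_ <;>
      · rw [add_pow_char]
        simp only [mul_pow, hy', inv_pow, hζp, inv_inv]
        ring
    · have hζp : ζ ^ p = ζ := by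
        have := (hζ.pow_eq_one_iff_dvd _).2 h
        calc ζ ^ p = ζ ^ (p - 1) * ζ := by rw [← pow_succ, Nat.sub_add_cancel hp.one_le]
          _ = ζ := by rw [this, one_mul]
      have hap : (algebraMap (ZMod p) K a) ^ p = algebraMap (ZMod p) K a := by
        rw [← map_pow, ZMod.pow_card]
      refine fin 1 (algebraMap (ZMod p) K a) (one_mul _) ?_ ?_ ?_ <;>
      · rw [add_pow_char]
        simp only [mul_pow, hap, inv_pow, hζp, one_pow]


def Inj (F : ℤ[X]) (n : ℕ) : Prop :=
  ∀ x y : ℤ, (n : ℤ) ∣ F.eval x - F.eval y → (n : ℤ) ∣ x - y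

lemma inj_one (F : ℤ[X]) : Inj F 1 := fun x y _ => by simp

lemma inj_mul (F : ℤ[X]) {m n : ℕ} (h : Nat.Coprime m n) :
    Inj F (m * n) ↔ Inj F m ∧ Inj F n := by
  have hc : IsCoprime (m : ℤ) n := Nat.isCoprime_iff_coprime.2 h
  have aux : ∀ m n : ℕ, IsCoprime (m : ℤ) n → Inj F (m * n) → Inj F m := by
    intro m n hc H x y hxy
    obtain ⟨u, v, huv⟩ := hc
    have hx : (m : ℤ) ∣ v * n * x - x := ⟨-u * x, by linear_combination x * huv⟩
    have hy : (m : ℤ) ∣ v * n * y - y := ⟨-u * y, by linear_combination y * huv⟩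
    have h1 : (m : ℤ) ∣ F.eval (v * n * x) - F.eval (v * n * y) := by
      have := dvd_sub (hx.trans (sub_dvd_eval_sub _ _ F)) (hy.trans (sub_dvd_eval_sub _ _ F))
      have := dvd_add this hxy
      ring_nf at this ⊢
      exact this
    have h2 : (n : ℤ) ∣ F.eval (v * n * x) - F.eval (v * n * y) := by
      refine dvd_trans ?_ (sub_dvd_eval_sub _ _ F)
      exact ⟨v * x - v * y, by ring⟩
    have h3 := H (v * n * x) (v * n * y)
      (by push_cast; exact IsCoprime.mul_dvd ⟨u, v, huv⟩ h1 h2)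
    have h4 : (m : ℤ) ∣ v * n * x - v * n * y := by
      refine dvd_trans ?_ h3; push_cast; exact dvd_mul_right _ _
    have := dvd_add (dvd_sub hy hx) h4
    have e : v * n * y - y - (v * n * x - x) + (v * n * x - v * n * y) = x - y := by ring
    rwa [e] at this
  constructor
  · intro H
    exact ⟨aux m n hc H, aux n m hc.symm (by rwa [mul_comm])⟩
  · rintro ⟨h1, h2⟩ x y hxy
    push_cast at hxy ⊢
    exact hc.mul_dvd (h1 _ _ ((dvd_mul_right _ _).trans hxy)) (h2 _ _ ((dvd_mul_left _ _).trans hxy))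

lemma inj_iff (F : ℤ[X]) (n : ℕ) :
    Inj F n ↔ Function.Injective (fun u : ZMod n => eval u (F.map (Int.castRingHom (ZMod n)))) := by
  have ev : ∀ x : ℤ, eval (x : ZMod n) (F.map (Int.castRingHom (ZMod n))) = ((F.eval x : ℤ) : ZMod n) := by
    intro x
    rw [eval_intCast_map]; simp
  constructor
  · intro H u v huv
    obtain ⟨x, rfl⟩ := ZMod.intCast_surjective u
    obtain ⟨y, rfl⟩ := ZMod.intCast_surjective v
    simp only [ev] at huv
    rw [ZMod.intCast_eq_intCast_iff_dvd_sub] at huv ⊢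
    rw [← dvd_neg, neg_sub] at huv ⊢
    exact H x y huv
  · intro H x y hxy
    rw [← dvd_neg, neg_sub] at hxy ⊢
    rw [← ZMod.intCast_eq_intCast_iff_dvd_sub] at hxy ⊢
    apply H
    simpa only [ev] using hxy

lemma surj_of_inj (F : ℤ[X]) {n : ℕ} (hn : n ≠ 0) (H : Inj F n) (z : ℤ) :
    ∃ x : ℤ, (n : ℤ) ∣ F.eval x - z := by
  have : NeZero n := ⟨hn⟩
  obtain ⟨u, hu⟩ := Finite.surjective_of_injective ((inj_iff F n).1 H) (z : ZMod n)
  obtain ⟨x, rfl⟩ := ZMod.intCast_surjective u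
  refine ⟨x, ?_⟩
  rw [← ZMod.intCast_eq_intCast_iff_dvd_sub, ← hu]
  simp only [eval_intCast_map]; simp

lemma inj_of_surj (F : ℤ[X]) {n : ℕ} (hn : n ≠ 0) (H : ∀ z : ℤ, ∃ x : ℤ, (n : ℤ) ∣ F.eval x - z) :
    Inj F n := by
  have : NeZero n := ⟨hn⟩
  rw [inj_iff]
  apply Finite.injective_iff_surjective.2
  intro u
  obtain ⟨z, rfl⟩ := ZMod.intCast_surjective u
  obtain ⟨x, hx⟩ := H z
  refine ⟨x, ?_⟩
  rw [← ZMod.intCast_eq_intCast_iff_dvd_sub] at hx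
  simp only [eval_intCast_map]; simp [hx]

lemma taylor (F : ℤ[X]) (x h : ℤ) :
    ∃ c, F.eval (x + h) = F.eval x + F.derivative.eval x * h + c * h ^ 2 := by
  obtain ⟨c, hc⟩ := F.binomExpansion x h
  exact ⟨c, hc⟩

lemma inj_pow (F : ℤ[X]) {p : ℕ} (hp : p.Prime) (e : ℕ) :
    Inj F (p ^ (e + 1)) ↔
      Inj F p ∧ (1 ≤ e → ∀ x : ℤ, ¬ (p : ℤ) ∣ F.derivative.eval x) := by
  have hp0 : (p : ℤ) ≠ 0 := by exact_mod_cast hp.ne_zero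
  have hpp : Prime (p : ℤ) := Nat.prime_iff_prime_int.1 hp
  constructor
  · intro H
    refine ⟨inj_of_surj F hp.ne_zero fun z => ?_, fun he x hx => ?_⟩
    · obtain ⟨x, hx⟩ := surj_of_inj F (pow_ne_zero _ hp.ne_zero) H z
      refine ⟨x, dvd_trans ?_ hx⟩
      push_cast
      exact dvd_pow_self _ (by omega)
    · obtain ⟨c, hc⟩ := taylor F x (p ^ e)
      have := H (x + p ^ e) x (by
        rw [hc]
        push_cast
        obtain ⟨d, hd⟩ := hx
        obtain ⟨f, rfl⟩ := Nat.exists_eq_add_of_le he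
        refine ⟨d + c * p ^ f, ?_⟩
        rw [hd]; ring)
      rw [add_sub_cancel_left] at this
      push_cast at this
      rw [pow_dvd_pow_iff hp0 hpp.not_isUnit] at this
      omega
  · rintro ⟨h1, h2⟩
    induction e with
    | zero => simpa using h1
    | succ e ih =>
      have h2 := h2 (by omega)
      have ih := ih (fun _ => h2)
      intro x y hxy
      obtain ⟨t, ht⟩ := ih x y (dvd_trans (by push_cast; exact pow_dvd_pow _ (by omega)) hxy)
      obtain ⟨c, hc⟩ := taylor F y (p ^ (e + 1) * t)
      have ex : x = y + p ^ (e + 1) * t := by push_cast at ht; linear_combination ht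
      rw [ex, hc] at hxy
      obtain ⟨s, hs⟩ := hxy
      push_cast at hs
      have h3 : (p : ℤ) ∣ F.derivative.eval y * t := by
        refine ⟨s - c * p ^ e * t ^ 2, ?_⟩
        apply mul_left_cancel₀ (pow_ne_zero (e + 1) hp0)
        linear_combination hs
      rcases hpp.dvd_or_dvd h3 with h | ⟨r, rfl⟩
      · exact absurd h (h2 y)
      · rw [ht]; push_cast
        exact ⟨r, by ring⟩

lemma prime_pow_inj_iff {p : ℕ} (hp : p.Prime) (e : ℕ) (A : ℤ) (hA : ¬ (p : ℤ) ∣ A) {k : ℕ} (hk : 0 < k) :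
    Inj (dickson 1 A k) (p ^ (e + 1)) ↔ Nat.Coprime k (p ^ 2 - 1) ∧ (1 ≤ e → ¬ p ∣ k) := by
  have : Fact p.Prime := ⟨hp⟩
  have ha : (A : ZMod p) ≠ 0 := by rwa [Ne, ZMod.intCast_zmod_eq_zero_iff_dvd]
  rw [inj_pow _ hp, inj_iff, map_dickson]
  simp only [eq_intCast]
  constructor
  · rintro ⟨h1, h2⟩
    refine ⟨coprime_of_inj (AlgebraicClosure (ZMod p)) ha h1, fun he hpk => h2 he 0 ?_⟩
    obtain ⟨k, rfl⟩ := Nat.exists_eq_add_of_le' hk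
    rw [deriv_one]
    simp only [eval_mul, eval_add, eval_natCast, Polynomial.eval_one]
    exact Dvd.dvd.mul_right (by exact_mod_cast hpk) _
  · rintro ⟨h1, h2⟩
    refine ⟨inj_of_coprime ha h1, fun he x hx => ?_⟩
    apply deriv_ne_of_coprime ha h1 (h2 he) (x : ZMod p)
    have := map_dickson (k := 1) (a := A) (Int.castRingHom (ZMod p)) k
    simp only [eq_intCast] at this
    rw [← this, derivative_map, eval_intCast_map]
    simpa [ZMod.intCast_zmod_eq_zero_iff_dvd] using hx

lemma inj_prod (F : ℤ[X]) {ι : Type*} (s : Finset ι) (f : ι → ℕ)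
    (h : (s : Set ι).Pairwise (fun i j => Nat.Coprime (f i) (f j))) :
    Inj F (∏ i ∈ s, f i) ↔ ∀ i ∈ s, Inj F (f i) := by
  classical
  induction s using Finset.induction_on with
  | empty => simp [inj_one]
  | insert i s hi ih =>
    rw [Finset.prod_insert hi, inj_mul, ih]
    · simp
    · exact h.mono (by simp)
    · apply Nat.Coprime.prod_right
      intro j hj
      exact h (by simp) (by simp [hj]) (by rintro rfl; exact hi hj)

lemma coprime_lcm {ι : Type*} (s : Finset ι) (f : ι → ℕ) (k : ℕ) :
    Nat.Coprime k (s.lcm f) ↔ ∀ i ∈ s, Nat.Coprime k (f i) := by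
  constructor
  · intro h i hi
    exact h.coprime_dvd_right (Finset.dvd_lcm hi)
  · intro h
    have : s.lcm f ∣ ∏ i ∈ s, f i := Finset.lcm_dvd fun i hi => Finset.dvd_prod_of_mem f hi
    exact (Nat.Coprime.prod_right h).coprime_dvd_right this

lemma coprime_lcm2 (k a b : ℕ) : Nat.Coprime k (Nat.lcm a b) ↔ Nat.Coprime k a ∧ Nat.Coprime k b :=
  ⟨fun h => ⟨h.coprime_dvd_right (Nat.dvd_lcm_left _ _), h.coprime_dvd_right (Nat.dvd_lcm_right _ _)⟩,
   fun h => (Nat.Coprime.mul_right h.1 h.2).coprime_dvd_right (Nat.lcm_dvd_mul _ _)⟩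

lemma coprime_pow {p : ℕ} (hp : p.Prime) (k e : ℕ) :
    Nat.Coprime k (p ^ e) ↔ (1 ≤ e → ¬ p ∣ k) := by
  rcases Nat.eq_zero_or_pos e with rfl | he
  · simp
  · rw [Nat.coprime_pow_right_iff he, Nat.coprime_comm, hp.coprime_iff_not_dvd]
    simp [Nat.one_le_iff_ne_zero, he.ne']

lemma coprime_l {p : ℕ} (hodd : Odd p) (k : ℕ) :
    Nat.Coprime k ((p ^ 2 - 1) / 2) ↔ Nat.Coprime k (p ^ 2 - 1) := by
  obtain ⟨m, rfl⟩ := hodd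
  have h2 : (2 * m + 1) ^ 2 - 1 = 2 * (2 * (m * (m + 1))) := by
    have : (2 * m + 1) ^ 2 = 2 * (2 * (m * (m + 1))) + 1 := by ring
    omega
  rw [h2, Nat.mul_div_cancel_left _ two_pos]
  simp only [Nat.coprime_mul_iff_right]
  tauto

end DicksonAux

open DicksonAux
theorem dickson_permutation_iff_gcd_w
    (e r : ℕ) (p ee : Fin r → ℕ)
    (hp : ∀ i, Nat.Prime (p i)) (hodd : ∀ i, Odd (p i)) (hmono : StrictMono p)
    (hee : ∀ i, 1 ≤ ee i)
    (n : ℕ) (hn : n = 2 ^ e * ∏ i, p i ^ ee i)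
    (l : Fin r → ℕ) (hl : ∀ i, l i = p i ^ (ee i - 1) * ((p i ^ 2 - 1) / 2))
    (l0 : ℕ) (hl0 : l0 = if e < 3 then 3 * 2 ^ (e - 1) else 3 * 2 ^ (e - 2))
    (w : ℕ) (hw : w = if e = 0 then Finset.univ.lcm l else Nat.lcm l0 (Finset.univ.lcm l))
    (k : ℕ) (hk : 0 < k) (a : ZMod n) (ha : IsUnit a) :
    Function.Bijective (fun u : ZMod n => Polynomial.eval u (Polynomial.dickson 1 a k)) ↔
      Nat.gcd k w = 1 := by
  have hn0 : n ≠ 0 := by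
    rw [hn]
    exact mul_ne_zero (by positivity)
      (Finset.prod_ne_zero_iff.2 fun i _ => pow_ne_zero _ (hp i).ne_zero)
  have : NeZero n := ⟨hn0⟩
  obtain ⟨A, rfl⟩ := ZMod.intCast_surjective a
  have hA : ∀ q : ℕ, q.Prime → q ∣ n → ¬ (q : ℤ) ∣ A := by
    intro q hq hqn hqA
    have h1 := ha.map (ZMod.castHom hqn (ZMod q))
    rw [map_intCast, (ZMod.intCast_zmod_eq_zero_iff_dvd A q).2 hqA] at h1
    have : Fact q.Prime := ⟨hq⟩
    exact not_isUnit_zero h1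
  rw [← Finite.injective_iff_bijective]
  have h0 : Function.Injective (fun u : ZMod n => eval u (dickson 1 (A : ZMod n) k)) ↔
      Inj (dickson 1 A k) n := by
    rw [inj_iff, map_dickson]; rfl
  rw [h0, hn, inj_mul, inj_prod]
  rotate_left
  · intro i _ j _ hij
    exact Nat.Coprime.pow _ _ ((Nat.coprime_primes (hp i) (hp j)).2 fun h => hij (hmono.injective h))
  · apply Nat.Coprime.prod_right
    intro i _
    exact Nat.Coprime.pow _ _ (Nat.coprime_two_left.2 (hodd i))
  have hodds : (∀ i ∈ Finset.univ, Inj (dickson 1 A k) (p i ^ ee i)) ↔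
      Nat.Coprime k (Finset.univ.lcm l) := by
    rw [coprime_lcm]
    refine forall₂_congr fun i _ => ?_
    obtain ⟨f, hf⟩ := Nat.exists_eq_add_of_le' (hee i)
    have hd : p i ∣ n := by
      rw [hn]
      refine Dvd.dvd.mul_left ((dvd_pow_self _ ?_).trans
        (Finset.dvd_prod_of_mem (fun i => p i ^ ee i) (Finset.mem_univ i))) _
      have := hee i; omega
    rw [hl, hf, prime_pow_inj_iff (hp i) f A (hA _ (hp i) hd) hk, Nat.coprime_mul_iff_right,
      coprime_l (hodd i), coprime_pow (hp i), Nat.add_sub_cancel, and_comm]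
  rw [hodds, hw]
  split_ifs with he
  · subst he
    simp [inj_one, Nat.Coprime]
  · change _ ↔ Nat.Coprime _ _
    rw [coprime_lcm2]
    refine and_congr_left fun _ => ?_
    obtain ⟨f, rfl⟩ := Nat.exists_eq_add_of_le' (Nat.one_le_iff_ne_zero.2 he)
    have hd : 2 ∣ n := by rw [hn]; exact Dvd.dvd.mul_right (dvd_pow_self _ he) _
    rw [prime_pow_inj_iff Nat.prime_two f A (hA _ Nat.prime_two hd) hk, hl0]
    split_ifs with h3
    · rw [Nat.coprime_mul_iff_right, coprime_pow Nat.prime_two, Nat.add_sub_cancel]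
      norm_num
    · rw [Nat.coprime_mul_iff_right, coprime_pow Nat.prime_two]
      have e1 : 1 ≤ f := by omega
      have e2 : 1 ≤ f + 1 - 2 := by omega
      simp only [e1, e2, true_implies]; norm_num
end

section
/- Let p ≥ 5 be a prime, let e ≥ 1 be an integer, and let k be a positive integer with gcd(k, p^{e−1}·((p² − 1)/2)) = 1. If e = 1, then D_k(u, 1) = u for all u ∈ ℤ/pℤ if and only if k ≡ 1, −1, p, or −p (mod (p² − 1)/2). If e > 1, then D_k(u, 1) = u for all u ∈ ℤ/p^eℤ if and only if k ≡ 1 or −1 (mod p^{e−1}·((p² − 1)/2)). -/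
open Polynomial

lemma dk_int {S : Type*} [CommRing S] (u : ℤ) (x y : S) (hxy : x * y = 1) (hu : x + y = (u : S)) (k : ℕ) :
    (((dickson 1 (1:ℤ) k).eval u : ℤ) : S) = x ^ k + y ^ k := by
  rw [← dickson_one_one_eval_add_inv x y hxy, hu]
  have := map_dickson (k := 1) (a := 1) (Int.castRingHom S) k
  simp only [map_one] at this
  rw [← this, eval_intCast_map]
  simp

lemma dk_cast {S : Type*} [CommRing S] (u : ℤ) (k : ℕ) :
    (((dickson 1 (1:ℤ) k).eval u : ℤ) : S) = (dickson 1 (1:S) k).eval (u : S) := by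
  have := map_dickson (k := 1) (a := 1) (Int.castRingHom S) k
  simp only [map_one] at this
  rw [← this, eval_intCast_map]
  simp

lemma ram_sum {S : Type*} [CommRing S] (X Y : S) (h : X + Y = 2) (hXY : X * Y = 1) (n : ℕ) :
    ∑ i ∈ Finset.range n, X ^ i * Y ^ (n - 1 - i) = n := by
  have hr : ∀ n, ∑ i ∈ Finset.range (n+1), X ^ i * Y ^ (n - i) = n + 1 := by
    have hs : ∀ n, ∑ i ∈ Finset.range (n+2), X ^ i * Y ^ (n + 1 - i) =
        X ^ (n+1) + Y * ∑ i ∈ Finset.range (n+1), X ^ i * Y ^ (n - i) := by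
      intro n
      rw [Finset.sum_range_succ, Finset.mul_sum, add_comm]
      congr 1
      · simp
      · apply Finset.sum_congr rfl
        intro i hi
        have : n + 1 - i = (n - i) + 1 := by
          have := Finset.mem_range.1 hi
          omega
        rw [this]; ring
    have hY : Y = 2 - X := by rw [← h]; ring
    have hX2 : X ^ 2 = 2 * X - 1 := by rw [hY] at hXY; linear_combination -hXY
    have hXn : ∀ n : ℕ, X ^ n = 1 + n * (X - 1) := by
      intro n
      induction n with
      | zero => simp
      | succ n ih => rw [pow_succ, ih]; push_cast; linear_combination n * hX2
    intro n
    induction n with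
    | zero => simp
    | succ n ih => 
      rw [hs, ih, hXn, hY]; push_cast; ring
  cases n with
  | zero => simp
  | succ n => simpa using hr n

lemma ram_dvd {S : Type*} [CommRing S] (p : ℕ) (x y : S) (hxy : x * y = 1)
    (h : (p : S) ∣ x + y - 2) (j : ℕ) :
    (p : S) ^ (j + 1) ∣ (x - y) * (x ^ (p ^ j) - y ^ (p ^ j)) := by
  induction j with
  | zero =>
    have : (x - y) * (x ^ (p ^ 0) - y ^ (p ^ 0)) = (x + y - 2) * (x + y + 2) := by
      simp only [pow_zero, pow_one]; linear_combination (-4) * hxy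
    rw [this]; simpa using Dvd.dvd.mul_right h _
  | succ j ih =>
    have e1 : x ^ (p ^ (j+1)) - y ^ (p ^ (j+1)) = 
      (∑ i ∈ Finset.range p, (x ^ p ^ j) ^ i * (y ^ p ^ j) ^ (p - 1 - i)) * (x ^ p ^ j - y ^ p ^ j) := by
      rw [(Commute.all _ _).geom_sum₂_mul, ← pow_mul, ← pow_mul, pow_succ]
    have e2 : (p : S) ∣ ∑ i ∈ Finset.range p, (x ^ p ^ j) ^ i * (y ^ p ^ j) ^ (p - 1 - i) := by
      rw [← Ideal.mem_span_singleton, ← Ideal.Quotient.eq_zero_iff_mem] at h ⊢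
      set f := Ideal.Quotient.mk (Ideal.span {(p : S)})
      simp only [map_sub, map_add, map_ofNat] at h
      simp only [map_sum, map_mul, map_pow]
      have hxy' : f x * f y = 1 := by rw [← map_mul, hxy, map_one]
      have hs : f x + f y = 1 + 1 := by linear_combination h
      rw [ram_sum]
      · rw [← map_natCast f, Ideal.Quotient.eq_zero_iff_mem]; exact Ideal.mem_span_singleton_self _
      · rw [← dickson_one_one_eval_add_inv _ _ hxy', hs, dickson_one_one_eval_add_inv 1 1 (by simp)]
        norm_num
      · rw [← mul_pow, hxy', one_pow]
    rw [e1, pow_succ]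
    convert mul_dvd_mul ih e2 using 1
    ring

lemma unram {S : Type*} [CommRing S] (p : ℕ) (hp : p.Prime) (hp5 : 5 ≤ p) (u : ℤ) (x y : S) (hxy : x * y = 1)
    (hu : x + y = (u : S)) (hn : ¬ ((p : ℤ) ∣ u ^ 2 - 4)) (j : ℕ) :
    (p : S) ^ (j + 1) ∣ x ^ (p ^ j * ((p ^ 2 - 1) / 2)) - 1 := by
  have key : (p : S) ∣ x ^ ((p ^ 2 - 1) / 2) - 1 := by
    have := Fact.mk hp
    have hd : (p : ℤ) ∣ (dickson 1 (1:ℤ) p).eval u - u := by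
      rw [← ZMod.intCast_zmod_eq_zero_iff_dvd]
      push_cast
      rw [dk_cast, dickson_one_one_zmod_p]; simp
    have hS : (p : S) ∣ x ^ p + y ^ p - (x + y) := by
      rw [← dk_int u x y hxy hu, hu]
      have := map_dvd (Int.castRingHom S) hd
      simpa using this
    obtain ⟨r, hr⟩ : ∃ r, p = 2 * r + 1 := hp.odd_of_ne_two (by omega)
    have hm : (p ^ 2 - 1) / 2 = 2 * r * (r + 1) := by
      have : p ^ 2 - 1 = 2 * (2 * r * (r + 1)) := by
        rw [hr]; zify [Nat.one_le_pow]; rw [Nat.cast_sub (by apply Nat.one_le_pow; omega)]; push_cast; ring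
      omega
    have hA : x ^ (p - 1) - 1 ∣ x ^ ((p ^ 2 - 1) / 2) - 1 := by
      rw [hm, pow_mul, show p - 1 = 2 * r by omega]
      exact sub_one_dvd_pow_sub_one _ _
    have hB : x ^ (p + 1) - 1 ∣ x ^ ((p ^ 2 - 1) / 2) - 1 := by
      rw [hm, show 2 * r * (r + 1) = (p + 1) * r by rw [hr]; ring, pow_mul]
      exact sub_one_dvd_pow_sub_one _ _
    have hAB : (p : S) ∣ (x ^ (p - 1) - 1) * (x ^ (p + 1) - 1) := by
      have : (x ^ (p - 1) - 1) * (x ^ (p + 1) - 1) = x ^ p * (x ^ p + y ^ p - (x + y)) := by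
        have h1 : x ^ p * y ^ p = 1 := by rw [← mul_pow, hxy, one_pow]
        have h2 : x ^ p = x ^ (p - 1) * x := by rw [← pow_succ]; congr 1; omega
        have h3 : x ^ (p+1) = x ^ p * x := pow_succ _ _
        rw [h2] at h1
        rw [h3, h2]; linear_combination (x ^ (p-1)) * hxy - h1
      rw [this]; exact hS.mul_left _
    set z := x ^ ((p ^ 2 - 1) / 2) - 1 with hz
    have hBz : (p : S) ∣ (x ^ (p + 1) - 1) * z := by
      obtain ⟨w, hw⟩ := hA
      rw [hw]
      convert hAB.mul_right w using 1
      ring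
    have hAz : (p : S) ∣ (x ^ (p - 1) - 1) * z := by
      obtain ⟨w, hw⟩ := hB
      rw [hw]
      convert hAB.mul_right w using 1
      ring
    have hco : IsCoprime (p : ℤ) (u ^ 2 - 4) :=
      (Int.prime_iff_natAbs_prime.2 (by simpa using hp)).coprime_iff_not_dvd.2 hn
    obtain ⟨a, b, hab⟩ := hco
    have hab' : (a : S) * p + b * ((x - y) ^ 2) = 1 := by
      have := congrArg (fun t : ℤ => (t : S)) hab
      push_cast at this
      rw [← hu] at this
      linear_combination this - 4 * b * hxy
    have hdiff : x - y = y ^ p * ((x ^ (p + 1) - 1) - (x ^ (p - 1) - 1)) := by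
      have h1 : x ^ p * y ^ p = 1 := by rw [← mul_pow, hxy, one_pow]
      have h2 : x ^ p = x ^ (p - 1) * x := by rw [← pow_succ]; congr 1; omega
      have h3 : x ^ (p+1) = x ^ p * x := pow_succ _ _
      have h4 : x ^ (p - 1) = x ^ p * y := by rw [h2, mul_assoc, hxy, mul_one]
      rw [h3, h4]; linear_combination (-x + y) * h1
    have hz2 : z = p * (a * z) + (b * (x - y) * y ^ p) * ((x ^ (p + 1) - 1) * z)
        - (b * (x - y) * y ^ p) * ((x ^ (p - 1) - 1) * z) := by
      linear_combination (-z) * hab' + (b * (x - y) * z) * hdiff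
    rw [hz2]
    exact ((Dvd.intro _ rfl).add (hBz.mul_left _)).sub (hAz.mul_left _)
  have := dvd_sub_pow_of_dvd_sub key j
  rwa [one_pow, ← pow_mul, mul_comm _ (p ^ j)] at this

lemma pow_sub_dvd {S : Type*} [CommRing S] (x y : S) {q n : ℕ} (h : q ∣ n) :
    x ^ q - y ^ q ∣ x ^ n - y ^ n := by
  obtain ⟨c, rfl⟩ := h
  rw [pow_mul, pow_mul]; exact sub_dvd_pow_sub_pow _ _ _

lemma back_S {S : Type*} [CommRing S] (p : ℕ) (hp : p.Prime) (hp5 : 5 ≤ p) (u : ℤ) (x y : S)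
    (hxy : x * y = 1) (hu : x + y = (u : S)) (j n d : ℕ) (hdn : d ≤ n)
    (h : p ^ j * ((p ^ 2 - 1) / 2) ∣ 2 * n ∨ p ^ j * ((p ^ 2 - 1) / 2) ∣ 2 * d) :
    (p : S) ^ (j + 1) ∣ x ^ (n + d) + y ^ (n + d) - (x ^ (n - d) + y ^ (n - d)) := by
  have hfac : x ^ (n + d) + y ^ (n + d) - (x ^ (n - d) + y ^ (n - d)) =
      (x ^ n - y ^ n) * (x ^ d - y ^ d) := by
    obtain ⟨t, rfl⟩ := Nat.exists_eq_add_of_le hdn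
    have h1 : x ^ d * y ^ d = 1 := by rw [← mul_pow, hxy, one_pow]
    rw [Nat.add_sub_cancel_left]
    simp only [pow_add]
    linear_combination (x ^ t + y ^ t) * h1
  rw [hfac]
  by_cases hn : (p : ℤ) ∣ u ^ 2 - 4
  · have hodd : Odd p := hp.odd_of_ne_two (by omega)
    have hqodd : Odd (p ^ j) := hodd.pow
    have hmain : (p : S) ^ (j + 1) ∣ (x - y) * (x ^ (p ^ j) - y ^ (p ^ j)) := by
      have hpz : Prime (p : ℤ) := Int.prime_iff_natAbs_prime.2 (by simpa using hp)
      rw [show u ^ 2 - 4 = (u - 2) * (u + 2) by ring] at hn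
      rcases hpz.dvd_or_dvd hn with h2 | h2
      · apply ram_dvd p x y hxy
        have := map_dvd (Int.castRingHom S) h2
        rw [hu]; simpa using this
      · have := ram_dvd p (-x) (-y) (by linear_combination hxy) (by
          have := map_dvd (Int.castRingHom S) h2
          rw [← dvd_neg]
          have e : -(-x + -y - 2) = (u : S) + 2 := by rw [← hu]; ring
          rw [e]; simpa using this) j
        rw [hqodd.neg_pow, hqodd.neg_pow] at this
        convert this using 1
        ring
    have hco : Nat.Coprime (p ^ j) 2 := (Nat.coprime_two_right).2 hqodd
    rcases h with h | h
    · have h1 : p ^ j ∣ n := hco.dvd_of_dvd_mul_left ((Dvd.intro _ rfl).trans h)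
      refine hmain.trans ?_
      rw [mul_comm]
      exact mul_dvd_mul (pow_sub_dvd _ _ h1) (sub_dvd_pow_sub_pow _ _ _)
    · have h1 : p ^ j ∣ d := hco.dvd_of_dvd_mul_left ((Dvd.intro _ rfl).trans h)
      refine hmain.trans ?_
      exact mul_dvd_mul (sub_dvd_pow_sub_pow _ _ _) (pow_sub_dvd _ _ h1)
  · have hm := unram p hp hp5 u x y hxy hu hn j
    have gen : ∀ t, p ^ j * ((p ^ 2 - 1) / 2) ∣ 2 * t → (p : S) ^ (j + 1) ∣ x ^ t - y ^ t := by
      intro t ht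
      have h1 : x ^ t - y ^ t = y ^ t * (x ^ (2 * t) - 1 ^ (2 * t)) := by
        have h1 : x ^ t * y ^ t = 1 := by rw [← mul_pow, hxy, one_pow]
        rw [two_mul, pow_add, one_pow]; linear_combination (-x ^ t) * h1
      rw [h1]
      apply Dvd.dvd.mul_left
      refine hm.trans ?_
      have := pow_sub_dvd x 1 ht
      rwa [one_pow] at this
    rcases h with h | h
    · exact (gen n h).mul_right _
    · exact (gen d h).mul_left _

lemma back_int (p : ℕ) (hp : p.Prime) (hp5 : 5 ≤ p) (u : ℤ) (j n d : ℕ) (hdn : d ≤ n)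
    (h : p ^ j * ((p ^ 2 - 1) / 2) ∣ 2 * n ∨ p ^ j * ((p ^ 2 - 1) / 2) ∣ 2 * d) :
    ((p ^ (j + 1) : ℕ) : ℤ) ∣ (dickson 1 (1:ℤ) (n + d)).eval u - (dickson 1 (1:ℤ) (n - d)).eval u := by
  let x : QuadraticAlgebra ℤ (-1) u := ⟨0, 1⟩
  let y : QuadraticAlgebra ℤ (-1) u := ⟨u, -1⟩
  have hxy : x * y = 1 := by
    ext <;> simp [x, y, QuadraticAlgebra.re_one, QuadraticAlgebra.im_one]
  have hu : x + y = ((u : ℤ) : QuadraticAlgebra ℤ (-1) u) := by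
    ext <;> simp [x, y]
  have := back_S p hp hp5 u x y hxy hu j n d hdn h
  rw [← dk_int u x y hxy hu, ← dk_int u x y hxy hu] at this
  rw [← QuadraticAlgebra.algebraMap_dvd_iff_dvd (a := -1) (b := u)]
  simpa using this

lemma back_zmod (p : ℕ) (hp : p.Prime) (hp5 : 5 ≤ p) (j n d : ℕ) (hdn : d ≤ n)
    (h : p ^ j * ((p ^ 2 - 1) / 2) ∣ 2 * n ∨ p ^ j * ((p ^ 2 - 1) / 2) ∣ 2 * d)
    (u : ZMod (p ^ (j + 1))) :
    (dickson 1 (1 : ZMod (p ^ (j + 1))) (n + d)).eval u = (dickson 1 1 (n - d)).eval u := by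
  obtain ⟨v, rfl⟩ := ZMod.intCast_surjective u
  have := back_int p hp hp5 v j n d hdn h
  rw [← ZMod.intCast_zmod_eq_zero_iff_dvd] at this
  push_cast at this
  rw [dk_cast, dk_cast] at this
  exact sub_eq_zero.1 this

lemma back (p : ℕ) (hp : p.Prime) (hp5 : 5 ≤ p) (j k l : ℕ) (hk : Odd k) (hl : Odd l)
    (h : (k : ℤ) ≡ l [ZMOD (p ^ j * ((p ^ 2 - 1) / 2) : ℕ)] ∨
      (k : ℤ) ≡ -l [ZMOD (p ^ j * ((p ^ 2 - 1) / 2) : ℕ)])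
    (u : ZMod (p ^ (j + 1))) :
    (dickson 1 (1 : ZMod (p ^ (j + 1))) k).eval u = (dickson 1 1 l).eval u := by
  wlog hle : l ≤ k generalizing k l
  · refine (this l k hl hk ?_ (by omega)).symm
    rcases h with h | h
    · exact Or.inl h.symm
    · right
      simpa using h.symm.neg
  obtain ⟨a, rfl⟩ := hk
  obtain ⟨b, rfl⟩ := hl
  have := back_zmod p hp hp5 j (a + b + 1) (a - b) (by omega) (by
    rcases h with h | h
    · right
      have := h.symm.dvd
      rw [← Int.natCast_dvd_natCast]
      convert this using 1
      push_cast [Nat.cast_sub (show b ≤ a by omega)]; ring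
    · left
      have := h.symm.dvd
      rw [← Int.natCast_dvd_natCast]
      convert this using 1
      push_cast; ring) u
  convert this using 3 <;> omega

lemma ident_field {K : Type*} [CommRing K] (x y : K) (hxy : x * y = 1) (k : ℕ) (hk : 0 < k)
    (h : (dickson 1 (1 : K) k).eval (x + y) = x + y) :
    (x ^ (k + 1) - 1) * (x ^ (k - 1) - 1) = 0 := by
  rw [dickson_one_one_eval_add_inv x y hxy] at h
  obtain ⟨t, rfl⟩ : ∃ t, k = t + 1 := ⟨k - 1, by omega⟩
  have h1 : x ^ (t + 1) * y ^ (t + 1) = 1 := by rw [← mul_pow, hxy, one_pow]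
  simp only [Nat.add_sub_cancel]
  have h2 : (x ^ (t + 1 + 1) - 1) * (x ^ t - 1) = x ^ (t + 1) * (x ^ (t+1) + y ^ (t+1) - (x + y)) := by
    rw [pow_succ] at h1
    rw [pow_succ x (t + 1), pow_succ x t]; linear_combination (x ^ t) * hxy - h1
  rw [h2, h]; ring

lemma fwdA (p : ℕ) (hp : p.Prime) (hp5 : 5 ≤ p) (j k : ℕ) (hk : 0 < k)
    (h : ∀ u : ZMod (p ^ (j + 1)), (dickson 1 1 k).eval u = u) :
    ((p ^ j * (p - 1) : ℕ) : ℤ) ∣ k - 1 ∨ ((p ^ j * (p - 1) : ℕ) : ℤ) ∣ k + 1 := by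
  have := Fact.mk hp
  have := ZMod.isCyclic_units_of_prime_pow p hp (by omega) (j + 1)
  obtain ⟨g, hg⟩ := IsCyclic.exists_generator (α := (ZMod (p ^ (j+1)))ˣ)
  have hord : orderOf g = p ^ j * (p - 1) := by
    rw [orderOf_eq_card_of_forall_mem_zpowers hg, Nat.card_eq_fintype_card, ZMod.card_units_eq_totient,
      Nat.totient_prime_pow_succ hp]
  have h0 := ident_field (g : ZMod (p ^ (j+1))) (g⁻¹ : _) (by simp) k hk (h _)
  have hcop : ∀ n : ℕ, 0 < n → n < p → IsUnit (n : ZMod (p ^ (j+1))) := by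
    intro n hn hnp
    rw [ZMod.isUnit_iff_coprime]
    exact Nat.Coprime.pow_right _ (((Nat.Prime.coprime_iff_not_dvd hp).2 (Nat.not_dvd_of_pos_of_lt hn hnp)).symm)
  have hg2 : IsUnit ((g : ZMod (p ^ (j+1))) ^ 2 - 1) := by
    obtain ⟨w, hw⟩ := hcop 2 (by omega) (by omega)
    obtain ⟨i, hi⟩ := (Submonoid.mem_powers_iff _ _).1 (mem_powers_iff_mem_zpowers.2 (hg w))
    have h3 := hcop 3 (by omega) (by omega)
    have e : ((3 : ℕ) : ZMod (p ^ (j+1))) = ((g : ZMod (p ^ (j+1))) ^ 2) ^ i - 1 := by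
      have : ((g : ZMod (p ^ (j+1)))) ^ i = 2 := by
        rw [← Units.val_pow_eq_pow_val, hi, hw]; rfl
      rw [← pow_mul, mul_comm, pow_mul, this]; norm_num
    rw [e] at h3
    exact isUnit_of_dvd_unit (sub_one_dvd_pow_sub_one _ _) h3
  have hloc : IsLocalRing (ZMod (p ^ (j+1))) := by
    have : Nontrivial (ZMod (p ^ (j+1))) :=
      ZMod.nontrivial_iff.2 (Nat.one_lt_pow (by omega) (by omega)).ne'
    exact IsLocalRing.of_surjective' (PadicInt.toZModPow (p := p) (j + 1)) (ZMod.ringHom_surjective _)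
  have hun : IsUnit (((g : ZMod (p ^ (j+1))) ^ (k + 1) - 1) + -((g : ZMod (p ^ (j+1))) ^ (k - 1) - 1)) := by
    have e : ((g : ZMod (p ^ (j+1))) ^ (k + 1) - 1) + -((g : ZMod (p ^ (j+1))) ^ (k - 1) - 1) =
      ((g ^ (k-1) : (ZMod (p ^ (j+1)))ˣ) : ZMod (p ^ (j+1))) * ((g : ZMod (p ^ (j+1))) ^ 2 - 1) := by
      obtain ⟨t, rfl⟩ : ∃ t, k = t + 1 := ⟨k - 1, by omega⟩
      simp only [Nat.add_sub_cancel]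
      push_cast; ring
    rw [e]
    exact (Units.isUnit _).mul hg2
  have fin : ∀ t, (g : ZMod (p ^ (j+1))) ^ t - 1 = 0 → p ^ j * (p - 1) ∣ t := by
    intro t ht
    rw [← hord]
    apply orderOf_dvd_of_pow_eq_one
    ext
    push_cast
    exact sub_eq_zero.1 ht
  rcases IsLocalRing.isUnit_or_isUnit_of_isUnit_add hun with h1 | h1
  · left
    have := Int.natCast_dvd_natCast.2 (fin _ (h1.mul_right_eq_zero.1 h0))
    rwa [Nat.cast_sub hk] at this
  · right
    have := Int.natCast_dvd_natCast.2 (fin _ ((IsUnit.neg_iff _).1 h1 |>.mul_left_eq_zero.1 h0))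
    exact_mod_cast this

lemma exK (p : ℕ) (hp : p.Prime) : ∃ (K : Type) (_ : Field K) (_ : CharP K p) (x : K) (u : ℤ),
    x ≠ 0 ∧ orderOf x = p + 1 ∧ x + x⁻¹ = u := by
  have := Fact.mk hp
  obtain ⟨g, hg⟩ := IsCyclic.exists_generator (α := (GaloisField p 2)ˣ)
  have hp2 := hp.two_le
  have hcard : orderOf g = (p - 1) * (p + 1) := by
    rw [orderOf_eq_card_of_forall_mem_zpowers hg, Nat.card_units, GaloisField.card p 2 (by norm_num)]
    obtain ⟨t, rfl⟩ : ∃ t, p = t + 1 := ⟨p - 1, by omega⟩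
    simp only [Nat.add_sub_cancel]
    rw [Nat.sub_eq_iff_eq_add (Nat.one_le_pow _ _ (by omega))]; ring
  have hord : orderOf (g ^ (p - 1)) = p + 1 := by
    rw [orderOf_pow_of_dvd (by omega) (by rw [hcard]; exact Dvd.intro _ rfl), hcard]
    exact Nat.mul_div_cancel_left _ (by omega)
  refine ⟨GaloisField p 2, inferInstance, inferInstance, ((g ^ (p - 1) : (GaloisField p 2)ˣ) : GaloisField p 2), ?_⟩
  set x := g ^ (p - 1) with hx
  have hxp : (x : GaloisField p 2) ^ p = (x : GaloisField p 2)⁻¹ := by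
    have h1 : (x : GaloisField p 2) ^ (p + 1) = 1 := by
      rw [← Units.val_pow_eq_pow_val, ← hord, pow_orderOf_eq_one]; rfl
    exact eq_inv_of_mul_eq_one_left (by rw [← pow_succ, h1])
  have hfix : ((x : GaloisField p 2) + (x : GaloisField p 2)⁻¹) ^ p = x + (x : GaloisField p 2)⁻¹ := by
    rw [add_pow_char, inv_pow, hxp, inv_inv, add_comm]
  have hmem := (Subfield.mem_bot_iff_pow_eq_self (GaloisField p 2) p).2 hfix
  have hle : (⊥ : Subfield (GaloisField p 2)) ≤ (algebraMap (ZMod p) (GaloisField p 2)).fieldRange := bot_le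
  obtain ⟨v, hv⟩ := hle hmem
  obtain ⟨u, rfl⟩ := ZMod.intCast_surjective v
  refine ⟨u, Units.ne_zero _, ?_, ?_⟩
  · rw [orderOf_units, hord]
  · rw [← hv]; simp

lemma dickson_deriv_id {S : Type*} [CommRing S] (x y : S) (hxy : x * y = 1) (k : ℕ) :
    (x - y) * (derivative (dickson 1 (1:S) k)).eval (x + y) = k * (x ^ k - y ^ k) := by
  induction k using Nat.twoStepInduction with
  | zero =>
    have : dickson 1 (1:S) 0 = C 2 := by rw [dickson_zero, C_ofNat]; norm_num
    rw [this]; simp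
  | one => simp
  | more n h1 h2 =>
    rw [dickson_add_two]
    simp only [derivative_sub, derivative_mul, derivative_X, C_1, derivative_one, eval_sub, eval_add,
      eval_mul, eval_X, eval_one, one_mul, zero_mul, zero_add, eval_zero,
      dickson_one_one_eval_add_inv x y hxy]
    rw [mul_sub, mul_add, h1]
    have e : (x - y) * ((x + y) * eval (x + y) (derivative (dickson 1 (1:S) (n + 1)))) =
      (x + y) * (((n + 1 : ℕ) : S) * (x ^ (n + 1) - y ^ (n + 1))) := by rw [← h2]; ring
    rw [e]
    push_cast
    linear_combination ((n : S) * (x ^ n - y ^ n)) * hxy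

lemma fwdB (p : ℕ) (hp : p.Prime) (hp5 : 5 ≤ p) (k : ℕ) (hk : 0 < k) :
    ((∀ u : ℤ, (p : ℤ) ∣ (dickson 1 (1:ℤ) k).eval u - u) →
      (((p + 1 : ℕ) : ℤ) ∣ k - 1 ∨ ((p + 1 : ℕ) : ℤ) ∣ k + 1)) ∧
    ((∀ u : ℤ, (p : ℤ) ^ 2 ∣ (dickson 1 (1:ℤ) k).eval u - u) →
      ((((p + 1 : ℕ) : ℤ) ∣ k - 1 ∧ (p : ℤ) ∣ k - 1) ∨ (((p + 1 : ℕ) : ℤ) ∣ k + 1 ∧ (p : ℤ) ∣ k + 1))) := by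
  obtain ⟨K, _, _, x, u, hx0, hord, hu⟩ := exK p hp
  have hxy : x * x⁻¹ = 1 := mul_inv_cancel₀ hx0
  have key : (∀ u : ℤ, (p : ℤ) ∣ (dickson 1 (1:ℤ) k).eval u - u) →
      ((((p + 1 : ℕ) : ℤ) ∣ k - 1 ∧ x ^ k = x) ∨ (((p + 1 : ℕ) : ℤ) ∣ k + 1 ∧ x ^ k = x⁻¹)) := by
    intro h
    have h1 := (CharP.intCast_eq_zero_iff K p _).2 (h u)
    rw [Int.cast_sub, dk_cast, ← hu, sub_eq_zero] at h1
    have := ident_field x x⁻¹ hxy k hk h1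
    rcases mul_eq_zero.1 this with h2 | h2
    · right
      have h3 := sub_eq_zero.1 h2
      refine ⟨?_, eq_inv_of_mul_eq_one_left (by rw [← pow_succ, h3])⟩
      have := Int.natCast_dvd_natCast.2 (orderOf_dvd_of_pow_eq_one h3)
      rw [hord] at this
      exact_mod_cast this
    · left
      have h3 := sub_eq_zero.1 h2
      constructor
      · have := Int.natCast_dvd_natCast.2 (orderOf_dvd_of_pow_eq_one h3)
        rw [hord, Nat.cast_sub hk] at this
        exact_mod_cast this
      · rw [show k = k - 1 + 1 by omega, pow_succ, h3, one_mul]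
  refine ⟨fun h => (key h).imp And.left And.left, fun h => ?_⟩
  have hder : (p : ℤ) ∣ (derivative (dickson 1 (1:ℤ) k)).eval u - 1 := by
    obtain ⟨c, hc⟩ := (dickson 1 (1:ℤ) k).binomExpansion u p
    obtain ⟨a, ha⟩ := h u
    obtain ⟨b, hb⟩ := h (u + p)
    refine ⟨b - a - c, ?_⟩
    have hp0 : (p : ℤ) ≠ 0 := by exact_mod_cast hp.ne_zero
    apply mul_left_cancel₀ hp0
    linear_combination hb - ha - hc
  have hder' : (derivative (dickson 1 (1:K) k)).eval (x + x⁻¹) = 1 := by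
    have h1 := (CharP.intCast_eq_zero_iff K p _).2 hder
    rw [Int.cast_sub, sub_eq_zero, Int.cast_one] at h1
    refine Eq.trans ?_ h1
    rw [hu]
    have := map_dickson (k := 1) (a := 1) (Int.castRingHom K) k
    simp only [map_one] at this
    rw [← this, derivative_map, eval_intCast_map]
    simp
  have hd := dickson_deriv_id x x⁻¹ hxy k
  rw [hder', mul_one, inv_pow] at hd
  have hne : x - x⁻¹ ≠ 0 := by
    intro h0
    have h2 : x ^ 2 = 1 := by
      rw [sq]; nth_rewrite 2 [sub_eq_zero.1 h0]; exact hxy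
    have := Nat.le_of_dvd (by norm_num) (orderOf_dvd_of_pow_eq_one h2)
    omega
  rcases key (fun u => (Dvd.intro_left (p:ℤ) (by ring)).trans (h u)) with ⟨h1, h2⟩ | ⟨h1, h2⟩
  · left
    refine ⟨h1, ?_⟩
    rw [← CharP.intCast_eq_zero_iff K p]
    rw [h2] at hd
    push_cast
    apply mul_right_cancel₀ hne
    linear_combination -hd
  · right
    refine ⟨h1, ?_⟩
    rw [← CharP.intCast_eq_zero_iff K p]
    rw [h2, inv_inv] at hd
    push_cast
    apply mul_right_cancel₀ hne
    linear_combination hd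

lemma comb (p : ℕ) (hp : p.Prime) (hp5 : 5 ≤ p) (j : ℕ) (z : ℤ)
    (h1 : ((p ^ j * (p - 1) : ℕ) : ℤ) ∣ z) (h2 : ((p + 1 : ℕ) : ℤ) ∣ z) :
    ((p ^ j * ((p ^ 2 - 1) / 2) : ℕ) : ℤ) ∣ z := by
  obtain ⟨r, hr⟩ : ∃ r, p = 2 * r + 1 := hp.odd_of_ne_two (by omega)
  have hm : (p ^ 2 - 1) / 2 = 2 * r * (r + 1) := by
    have : p ^ 2 = 2 * (2 * r * (r + 1)) + 1 := by rw [hr]; ring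
    omega
  rw [Int.natCast_dvd] at *
  rw [hm]
  rw [show p - 1 = 2 * r by omega] at h1
  generalize z.natAbs = w at *
  obtain ⟨v, rfl⟩ : 2 ∣ w := (Dvd.intro_left (p ^ j * r) (by ring)).trans h1
  have h3 : p ^ j * r ∣ v := by
    rw [← Nat.mul_dvd_mul_iff_left (show 0 < 2 by norm_num)]
    convert h1 using 1; ring
  have h4 : r + 1 ∣ v := by
    rw [← Nat.mul_dvd_mul_iff_left (show 0 < 2 by norm_num)]
    convert h2 using 1; rw [hr]; ring
  have hc : Nat.Coprime (p ^ j * r) (r + 1) := by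
    apply Nat.Coprime.mul_left
    · apply Nat.Coprime.pow_left
      rw [hr, show 2 * r + 1 = r + (r + 1) by ring]
      simp
    · simp
  have := mul_dvd_mul_left 2 (hc.mul_dvd_of_dvd_of_dvd h3 h4)
  rwa [show p ^ j * (2 * r * (r + 1)) = 2 * (p ^ j * r * (r + 1)) by ring]

theorem dickson_identity_iff_odd_prime_pow (p : ℕ) (hp : p.Prime) (hp5 : 5 ≤ p)
    (e : ℕ) (he : 1 ≤ e) (k : ℕ) (hk : 0 < k)
    (m : ℕ) (hm : m = p ^ (e - 1) * ((p ^ 2 - 1) / 2)) (hgcd : Nat.gcd k m = 1) :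
    (e = 1 →
      ((∀ u : ZMod p, Polynomial.eval u (Polynomial.dickson 1 1 k) = u) ↔
        ((k : ℤ) ≡ 1 [ZMOD (m : ℕ)] ∨ (k : ℤ) ≡ -1 [ZMOD (m : ℕ)] ∨
          (k : ℤ) ≡ (p : ℤ) [ZMOD (m : ℕ)] ∨ (k : ℤ) ≡ -(p : ℤ) [ZMOD (m : ℕ)]))) ∧
    (1 < e →
      ((∀ u : ZMod (p ^ e), Polynomial.eval u (Polynomial.dickson 1 1 k) = u) ↔
        ((k : ℤ) ≡ 1 [ZMOD (m : ℕ)] ∨ (k : ℤ) ≡ -1 [ZMOD (m : ℕ)]))) := by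
  obtain ⟨j, rfl⟩ : ∃ j, e = j + 1 := ⟨e - 1, by omega⟩
  simp only [Nat.add_sub_cancel] at hm
  have hpodd : Odd p := hp.odd_of_ne_two (by omega)
  have hkodd : Odd k := by
    obtain ⟨r, hr⟩ := hpodd
    have hm2 : (p ^ 2 - 1) / 2 = 2 * r * (r + 1) := by
      have : p ^ 2 = 2 * (2 * r * (r + 1)) + 1 := by rw [hr]; ring
      omega
    rw [← Nat.not_even_iff_odd]
    intro hev
    have h2m : 2 ∣ m := by rw [hm, hm2]; exact Dvd.intro_left (p ^ j * (r * (r + 1))) (by ring)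
    have := Nat.dvd_gcd hev.two_dvd h2m
    rw [hgcd] at this
    omega
  have toInt : ∀ n : ℕ, (∀ u : ZMod n, Polynomial.eval u (Polynomial.dickson 1 1 k) = u) →
      ∀ u : ℤ, (n : ℤ) ∣ (dickson 1 (1:ℤ) k).eval u - u := by
    intro n h u
    rw [← ZMod.intCast_zmod_eq_zero_iff_dvd]
    push_cast
    rw [dk_cast, h, sub_self]
  have h1p : ((p ^ j * (p - 1) : ℕ) : ℤ) = p ^ j * (p - 1) := by
    push_cast [Nat.cast_sub hp.one_le]; rfl
  constructor
  · intro he1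
    obtain rfl : j = 0 := by omega
    have hpow : p ^ (0 + 1) = p := by simp
    have hB := back p hp hp5 0 k
    have hA := fwdA p hp hp5 0 k hk
    rw [hpow] at hA hB
    rw [← hm] at hB
    constructor
    · intro h
      have a1 := hA h
      have b1 := (fwdB p hp hp5 k hk).1 (toInt p h)
      have c := comb p hp hp5 0
      rw [← hm] at c
      rw [h1p] at c a1
      simp only [pow_zero, one_mul, Nat.cast_add, Nat.cast_one] at c a1 b1
      have conv : ∀ t : ℤ, (m : ℤ) ∣ k - t → (k : ℤ) ≡ t [ZMOD (m : ℕ)] :=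
        fun t ht => (Int.modEq_iff_dvd.2 ht).symm
      rcases a1 with a1 | a1 <;> rcases b1 with b1 | b1
      · exact Or.inl (conv _ (c _ a1 b1))
      · refine Or.inr (Or.inr (Or.inl (conv _ (c _ ?_ ?_))))
        · have := dvd_sub a1 (dvd_refl ((p:ℤ) - 1))
          ring_nf at this ⊢; exact this
        · have := dvd_sub b1 (dvd_refl ((p:ℤ) + 1))
          ring_nf at this ⊢; exact this
      · refine Or.inr (Or.inr (Or.inr (conv _ (c _ ?_ ?_))))
        · have := dvd_add a1 (dvd_refl ((p:ℤ) - 1))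
          ring_nf at this ⊢; exact this
        · have := dvd_add b1 (dvd_refl ((p:ℤ) + 1))
          ring_nf at this ⊢; exact this
      · refine Or.inr (Or.inl (conv _ (c _ ?_ ?_)))
        · convert a1 using 1; ring
        · convert b1 using 1; ring
    · have := Fact.mk hp
      intro h u
      have case1 : ((k : ℤ) ≡ 1 [ZMOD (m : ℕ)] ∨ (k : ℤ) ≡ -1 [ZMOD (m : ℕ)]) → 
          Polynomial.eval u (Polynomial.dickson 1 1 k) = u := by
        intro h
        rw [hB 1 hkodd (by simp) (by simpa using h) u]; simp
      have case2 : ((k : ℤ) ≡ p [ZMOD (m : ℕ)] ∨ (k : ℤ) ≡ -p [ZMOD (m : ℕ)]) → 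
          Polynomial.eval u (Polynomial.dickson 1 1 k) = u := by
        intro h
        rw [hB p hkodd hpodd h u, dickson_one_one_zmod_p]; simp
      tauto
  · intro he1
    constructor
    · intro h
      have a1 := fwdA p hp hp5 j k hk h
      have hI := toInt _ h
      have b1 := (fwdB p hp hp5 k hk).2 (fun u => by
        refine Dvd.dvd.trans ?_ (hI u)
        push_cast
        exact pow_dvd_pow _ he1)
      have c := comb p hp hp5 j
      rw [← hm] at c
      have conv : ∀ t : ℤ, (m : ℤ) ∣ k - t → (k : ℤ) ≡ t [ZMOD (m : ℕ)] :=
        fun t ht => (Int.modEq_iff_dvd.2 ht).symm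
      have hpq : (p : ℤ) ∣ ((p ^ j * (p - 1) : ℕ) : ℤ) := by
        rw [Int.natCast_dvd_natCast]
        exact (dvd_pow_self p (by omega)).mul_right _
      have hcontra : (p : ℤ) ∣ k - 1 → (p : ℤ) ∣ k + 1 → False := by
        intro x1 x2
        have := dvd_sub x2 x1
        have := Int.le_of_dvd (by omega) this
        omega
      rcases a1 with a1 | a1 <;> rcases b1 with ⟨b1, b2⟩ | ⟨b1, b2⟩
      · exact Or.inl (conv _ (c _ a1 b1))
      · exact (hcontra (hpq.trans a1) b2).elim
      · exact (hcontra b2 (hpq.trans a1)).elim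
      · refine Or.inr (conv _ (c _ ?_ ?_))
        · convert a1 using 1; ring
        · convert b1 using 1; ring
    · intro h u
      rw [hm] at h
      rw [back p hp hp5 j k 1 hkodd (by simp) (by simpa using h) u]; simp
end

section
/- Let n = p_1^{e_1} ⋯ p_r^{e_r} be a product of powers of distinct odd primes and let k be a positive integer with gcd(k, w(n)) = 1. Then D_k(u, 1) = u for all u ∈ ℤ/nℤ if and only if for each i = 1, …, r there exists a positive integer a_i with gcd(a_i, l_i) = 1 such that D_{a_i}(u, 1) = u for all u ∈ ℤ/p_i^{e_i}ℤ and k ≡ a_i (mod l_i). -/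
open Polynomial

/-- Lucas sequence of the second kind for `x² - ux + 1`. -/
def lucU (u : ℤ) : ℕ → ℤ
  | 0 => 0
  | 1 => 1
  | n + 2 => u * lucU u (n + 1) - lucU u n

/-- Companion Lucas sequence for `x² - ux + 1`. -/
def lucV (u : ℤ) : ℕ → ℤ
  | 0 => 2
  | 1 => u
  | n + 2 => u * lucV u (n + 1) - lucV u n

theorem eval_dickson_eq_lucV (u : ℤ) : ∀ n, (dickson 1 (1 : ℤ) n).eval u = lucV u n
  | 0 => by simp [lucV]
  | 1 => by simp [lucV]
  | n + 2 => by
    rw [dickson_add_two, lucV, ← eval_dickson_eq_lucV u (n + 1), ← eval_dickson_eq_lucV u n]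
    simp

theorem eval_dickson_cast {R : Type*} [CommRing R] (u : ℤ) (n : ℕ) :
    (dickson 1 (1 : R) n).eval (u : R) = (lucV u n : R) := by
  rw [← eval_dickson_eq_lucV]
  have h := map_dickson (k := 1) (a := (1 : ℤ)) (Int.castRingHom R) n
  rw [map_one] at h
  rw [← h]
  have := eval_map_apply (Int.castRingHom R) (p := dickson 1 (1 : ℤ) n) u
  simpa using this

theorem luc_succ (u : ℤ) (n : ℕ) : 2 * lucU u (n + 1) = u * lucU u n + lucV u n ∧
    2 * lucV u (n + 1) = (u ^ 2 - 4) * lucU u n + u * lucV u n := by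
  induction n using Nat.twoStepInduction with
  | zero => simp [lucU, lucV]; ring
  | one => constructor <;> simp [lucU, lucV] <;> ring
  | more n h1 h2 =>
    constructor
    · rw [lucU, lucU, lucV]
      have h := h2.1
      rw [lucU] at h
      linear_combination u * h - h1.1
    · rw [lucV, lucU, lucV]
      have h := h2.2
      rw [lucV] at h
      linear_combination u * h - h1.2

theorem luc_add (u : ℤ) (a b : ℕ) :
    2 * lucU u (a + b) = lucU u a * lucV u b + lucV u a * lucU u b ∧
    2 * lucV u (a + b) = lucV u a * lucV u b + (u ^ 2 - 4) * lucU u a * lucU u b := by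
  induction b with
  | zero => simp [lucU, lucV]; constructor <;> ring
  | succ b ih =>
    obtain ⟨i1, i2⟩ := ih
    obtain ⟨s1, s2⟩ := luc_succ u b
    obtain ⟨t1, t2⟩ := luc_succ u (a + b)
    rw [← add_assoc]
    constructor
    · apply mul_left_cancel₀ (two_ne_zero (α := ℤ))
      linear_combination 2 * t1 + u * i1 + i2 - lucU u a * s2 - lucV u a * s1
    · apply mul_left_cancel₀ (two_ne_zero (α := ℤ))
      linear_combination 2 * t2 + (u ^ 2 - 4) * i1 + u * i2 - lucV u a * s2
        - (u ^ 2 - 4) * lucU u a * s1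

theorem luc_norm (u : ℤ) (n : ℕ) : lucV u n ^ 2 - 4 = (u ^ 2 - 4) * lucU u n ^ 2 := by
  induction n with
  | zero => simp [lucU, lucV]
  | succ n ih =>
    obtain ⟨s1, s2⟩ := luc_succ u n
    apply mul_left_cancel₀ (four_ne_zero (α := ℤ))
    have e1 : (2 * lucV u (n+1)) ^ 2 = ((u ^ 2 - 4) * lucU u n + u * lucV u n) ^ 2 := by rw [s2]
    have e2 : (2 * lucU u (n+1)) ^ 2 = (u * lucU u n + lucV u n) ^ 2 := by rw [s1]
    linear_combination e1 - (u ^ 2 - 4) * e2 + 4 * ih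

theorem lucV_diff (u : ℤ) (k m : ℕ) :
    lucV u (k + 2 * m) - lucV u k = (u ^ 2 - 4) * lucU u m * lucU u (k + m) := by
  obtain ⟨a1, a2⟩ := luc_add u k m
  obtain ⟨b1, b2⟩ := luc_add u (k + m) m
  have hn := luc_norm u m
  rw [two_mul, ← add_assoc]
  apply mul_left_cancel₀ (four_ne_zero (α := ℤ))
  linear_combination 2 * b2 + lucV u m * a2 - (u ^ 2 - 4) * lucU u m * a1 + lucV u k * hn

theorem lucU_mul (u : ℤ) (m j : ℕ) :
    lucU u (j * m) = lucU (lucV u m) j * lucU u m := by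
  induction j using Nat.twoStepInduction with
  | zero => simp [lucU]
  | one => simp [lucU]
  | more n h1 h2 =>
    rw [lucU]
    obtain ⟨a1, a2⟩ := luc_add u (n * m) m
    obtain ⟨b1, b2⟩ := luc_add u (n * m + m) m
    have hn := luc_norm u m
    have e1 : (n + 1) * m = n * m + m := by ring
    have e2 : (n + 2) * m = n * m + m + m := by ring
    rw [e1] at h2
    rw [e2]
    apply mul_left_cancel₀ (four_ne_zero (α := ℤ))
    linear_combination 2 * b1 + 4 * lucV u m * h2 - 4 * h1 - lucV u m * a1 + lucU u m * a2
      - lucU u (n * m) * hn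

theorem lucU_near_two (v : ℤ) (n : ℕ) : (v - 2) ∣ lucU v n - n := by
  induction n using Nat.twoStepInduction with
  | zero => simp [lucU]
  | one => simp [lucU]
  | more n h1 h2 =>
    obtain ⟨a, ha⟩ := h1
    obtain ⟨b, hb⟩ := h2
    refine ⟨lucU v (n + 1) + 2 * b - a, ?_⟩
    rw [lucU]
    push_cast at *
    linear_combination 2 * hb - ha

theorem lucU_near_neg_two (v : ℤ) (n : ℕ) : (v + 2) ∣ lucU v n + (-1) ^ n * n := by
  induction n using Nat.twoStepInduction with
  | zero => simp [lucU]
  | one => simp [lucU]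
  | more n h1 h2 =>
    obtain ⟨a, ha⟩ := h1
    obtain ⟨b, hb⟩ := h2
    refine ⟨lucU v (n + 1) - 2 * b - a, ?_⟩
    rw [lucU]
    push_cast at *
    linear_combination - 2 * hb - ha

theorem prime_dvd_lucU (p : ℕ) (hp : p.Prime) (v : ℤ) (h : (p : ℤ) ∣ v ^ 2 - 4) :
    (p : ℤ) ∣ lucU v p := by
  have hp' : Prime (p : ℤ) := Nat.prime_iff_prime_int.mp hp
  have h' : (p : ℤ) ∣ (v - 2) * (v + 2) := by convert h using 1; ring
  rcases hp'.dvd_or_dvd h' with h1 | h1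
  · have := (h1.trans (lucU_near_two v p)).add (dvd_refl (p : ℤ))
    simpa using this
  · have := dvd_sub (h1.trans (lucU_near_neg_two v p)) (dvd_mul_left (p : ℤ) ((-1) ^ p))
    simpa using this

theorem lucV_eq_pow {K : Type*} [CommRing K] (u : ℤ) (x y : K) (hxy : x * y = 1)
    (hs : x + y = u) (n : ℕ) : (lucV u n : K) = x ^ n + y ^ n := by
  rw [← eval_dickson_cast, ← hs, dickson_one_one_eval_add_inv x y hxy]

theorem base_case (p q t : ℕ) (hp : p.Prime) (hq : p = 2 * q + 1) (ht : q * (q + 1) = 2 * t)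
    (u : ℤ) : (p : ℤ) ∣ (u ^ 2 - 4) * lucU u (2 * t) := by
  haveI : Fact p.Prime := ⟨hp⟩
  have hp' : Prime (p : ℤ) := Nat.prime_iff_prime_int.mp hp
  suffices h : (p : ℤ) ∣ (u ^ 2 - 4) * lucU u (2 * t) ^ 2 by
    rcases hp'.dvd_or_dvd h with h | h
    · exact h.mul_right _
    · exact (hp'.dvd_of_dvd_pow h).mul_left _
  rw [← luc_norm]
  let K := AlgebraicClosure (ZMod p)
  haveI : CharP K p := charP_of_injective_algebraMap (algebraMap (ZMod p) K).injective p
  rw [← CharP.intCast_eq_zero_iff K p]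
  obtain ⟨x, hx⟩ : ∃ x : K, x * x - u * x + 1 = 0 := by
    have hdeg : (X ^ 2 - C (u : K) * X + 1 : K[X]).degree = 2 := by compute_degree!
    obtain ⟨x, hx⟩ := IsAlgClosed.exists_root (X ^ 2 - C (u : K) * X + 1 : K[X])
      (by rw [hdeg]; norm_num)
    refine ⟨x, ?_⟩
    simp [IsRoot] at hx
    linear_combination hx
  have hxy : x * (u - x) = 1 := by linear_combination -hx
  set y : K := u - x with hy
  have hs : x + y = u := by rw [hy]; ring
  have hup : ((u : K)) ^ p = u := by
    have := congrArg (algebraMap (ZMod p) K) (ZMod.pow_card (u : ZMod p))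
    rwa [map_pow, map_intCast] at this
  have hxyp : x ^ p * y ^ p = 1 := by rw [← mul_pow, hxy, one_pow]
  have hsp : x ^ p + y ^ p = u := by rw [← add_pow_char, hs, hup]
  have hfac : (x ^ p - x) * (x ^ p - y) = 0 := by
    linear_combination x ^ p * hsp - x ^ p * hs + hxy - hxyp
  have hx1 : x ^ (4 * t) = 1 := by
    have e1 : 4 * t = 2 * q * (q + 1) := by linarith
    have e2 : 4 * t = 2 * (q + 1) * q := by linarith
    rcases mul_eq_zero.mp hfac with h | h
    · have : x ^ (2 * q) = 1 := by
        have hpq : x ^ p = x ^ (2 * q) * x := by rw [← pow_succ]; exact congrArg (x ^ ·) hq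
        rw [hpq] at h
        linear_combination y * h - (x ^ (2 * q) - 1) * hxy
      rw [e1, pow_mul, this, one_pow]
    · have : x ^ (2 * (q + 1)) = 1 := by
        have hpq : x ^ p = x ^ (2 * q + 1) := congrArg (x ^ ·) hq
        rw [hpq] at h
        rw [show 2 * (q + 1) = 2 * q + 1 + 1 by ring, pow_succ]
        linear_combination x * h + hxy
      rw [e2, pow_mul, this, one_pow]
  have hy1 : y ^ (4 * t) = 1 := by
    have : x ^ (4 * t) * y ^ (4 * t) = 1 := by rw [← mul_pow, hxy, one_pow]
    rwa [hx1, one_mul] at this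
  have h0 : x ^ (2 * t) * y ^ (2 * t) = 1 := by rw [← mul_pow, hxy, one_pow]
  push_cast
  rw [lucV_eq_pow u x y hxy hs]
  have e : 4 * t = 2 * t + 2 * t := by ring
  rw [e, pow_add] at hx1 hy1
  linear_combination hx1 + hy1 + 2 * h0

theorem lift_case (p m : ℕ) (hp : p.Prime) (u : ℤ) (h0 : (p : ℤ) ∣ (u ^ 2 - 4) * lucU u m)
    (e : ℕ) : (p : ℤ) ^ (e + 1) ∣ (u ^ 2 - 4) * lucU u (p ^ e * m) := by
  induction e with
  | zero => simpa using h0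
  | succ e ih =>
    have h1 : (p : ℤ) ∣ (u ^ 2 - 4) * lucU u (p ^ e * m) :=
      (dvd_pow_self _ (Nat.succ_ne_zero e)).trans ih
    have h2 : (p : ℤ) ∣ lucV u (p ^ e * m) ^ 2 - 4 := by
      rw [luc_norm, pow_two (lucU _ _), ← mul_assoc]
      exact h1.mul_right _
    have h3 := prime_dvd_lucU p hp _ h2
    rw [show p ^ (e + 1) * m = p * (p ^ e * m) by ring, lucU_mul, pow_succ]
    have := mul_dvd_mul ih h3
    rwa [mul_assoc (u ^ 2 - 4), mul_comm (lucU u (p ^ e * m))] at this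

theorem lucV_periodic (p e : ℕ) (hp : p.Prime) (hodd : Odd p) (he : 1 ≤ e) (u : ℤ) :
    Function.Periodic (fun n => ((lucV u n : ℤ) : ZMod (p ^ e)))
      (p ^ (e - 1) * ((p ^ 2 - 1) / 2)) := by
  obtain ⟨q, hq⟩ := hodd
  obtain ⟨t, ht⟩ := (Nat.even_mul_succ_self q).two_dvd
  obtain ⟨e, rfl⟩ : ∃ f, e = f + 1 := ⟨e - 1, by omega⟩
  have hl : p ^ (e + 1 - 1) * ((p ^ 2 - 1) / 2) = 2 * (p ^ e * (2 * t)) := by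
    have h : p ^ 2 = 8 * t + 1 := by
      rw [hq]
      linear_combination 4 * ht
    have h2 : (p ^ 2 - 1) / 2 = 4 * t := by omega
    rw [h2, Nat.add_sub_cancel]
    ring
  intro k
  simp only
  rw [hl, eq_comm, ZMod.intCast_eq_intCast_iff_dvd_sub, lucV_diff]
  have := lift_case p (2 * t) hp u (base_case p q t hp hq ht u) e
  push_cast
  exact this.mul_right _

theorem dickson_forall_iff (n k : ℕ) :
    (∀ u : ZMod n, Polynomial.eval u (Polynomial.dickson 1 1 k) = u) ↔
      ∀ u : ℤ, (n : ℤ) ∣ u - lucV u k := by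
  constructor
  · intro h u
    have := h (u : ZMod n)
    rwa [eval_dickson_cast, ZMod.intCast_eq_intCast_iff_dvd_sub] at this
  · intro h u
    obtain ⟨u, rfl⟩ := ZMod.intCast_surjective u
    rw [eval_dickson_cast, ZMod.intCast_eq_intCast_iff_dvd_sub]
    exact h u

theorem dickson_identity_iff_local_odd
    (r : ℕ) (p ee : Fin r → ℕ)
    (hp : ∀ i, Nat.Prime (p i)) (hodd : ∀ i, Odd (p i)) (hmono : StrictMono p)
    (hee : ∀ i, 1 ≤ ee i)
    (n : ℕ) (hn : n = ∏ i, p i ^ ee i)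
    (l : Fin r → ℕ) (hl : ∀ i, l i = p i ^ (ee i - 1) * ((p i ^ 2 - 1) / 2))
    (w : ℕ) (hw : w = Finset.univ.lcm l)
    (k : ℕ) (hk : 0 < k) (hgcd : Nat.gcd k w = 1) :
    (∀ u : ZMod n, Polynomial.eval u (Polynomial.dickson 1 1 k) = u) ↔
      ∀ i, ∃ a : ℕ, 0 < a ∧ Nat.gcd a (l i) = 1 ∧
        (∀ u : ZMod (p i ^ ee i), Polynomial.eval u (Polynomial.dickson 1 1 a) = u) ∧
        k ≡ a [MOD l i] := by
  constructor
  · intro h i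
    refine ⟨k, hk, ?_, ?_, Nat.ModEq.refl _⟩
    · have hd : l i ∣ w := by
        rw [hw]
        exact Finset.dvd_lcm (Finset.mem_univ i)
      exact Nat.Coprime.coprime_dvd_right hd hgcd
    · rw [dickson_forall_iff] at h ⊢
      intro u
      refine dvd_trans ?_ (h u)
      rw [hn]
      exact_mod_cast Finset.dvd_prod_of_mem (fun i => p i ^ ee i) (Finset.mem_univ i)
  · intro h
    rw [dickson_forall_iff]
    intro u
    rw [hn]
    push_cast
    apply Finset.prod_dvd_of_coprime
    · intro i _ j _ hij
      have : Nat.Coprime (p i ^ ee i) (p j ^ ee j) :=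
        Nat.Coprime.pow _ _ ((Nat.coprime_primes (hp i) (hp j)).mpr (hmono.injective.ne hij))
      have h2 := Nat.isCoprime_iff_coprime.mpr this
      simpa [Function.onFun] using h2
    · intro i _
      obtain ⟨a, -, -, ha, hka⟩ := h i
      have hper := lucV_periodic (p i) (ee i) (hp i) (hodd i) (hee i) u
      rw [← hl i] at hper
      have h1 := hper.map_mod_nat k
      have h2 := hper.map_mod_nat a
      rw [show k % l i = a % l i from hka] at h1
      have h3 := h1.symm.trans h2
      have h4 := ha (u : ZMod (p i ^ ee i))
      rw [eval_dickson_cast, ← h3, ZMod.intCast_eq_intCast_iff_dvd_sub] at h4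
      simpa using h4
end

section
/- Let p ≥ 5 be a prime and e ≥ 1 an integer, and set l = p^{e−1}·((p² − 1)/2). Let G_{p^e} be the set of functions f : ℤ/p^eℤ → ℤ/p^eℤ such that there exists a positive integer k with gcd(k, l) = 1 and f(u) = D_k(u, 1) for all u ∈ ℤ/p^eℤ. Then the cardinality of G_{p^e} equals φ(l)/4 if e = 1 and equals φ(l)/2 if e > 1, where φ is Euler's totient function; explicitly, |G_p| = φ((p² − 1)/2)/4 and |G_{p^e}| = (p^{e−2}(p−1)/2)·φ((p² − 1)/2) for e > 1. -/
open Polynomial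

lemma dk_factor {R : Type*} [CommRing R] (x y : R) (h : x * y = 1) (k m : ℕ) (hmk : m ≤ k) :
    x ^ k + y ^ k - (x ^ m + y ^ m) = y ^ k * ((x ^ (k - m) - 1) * (x ^ (k + m) - 1)) := by
  obtain ⟨d, rfl⟩ := Nat.exists_eq_add_of_le hmk
  have hm : x ^ m * y ^ m = 1 := by rw [← mul_pow, h, one_pow]
  have hd : x ^ d * y ^ d = 1 := by rw [← mul_pow, h, one_pow]
  simp only [Nat.add_sub_cancel_left, pow_add]
  generalize x ^ m = A at *
  generalize y ^ m = B at *
  generalize x ^ d = C at *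
  generalize y ^ d = D at *
  linear_combination (A - A * C) * hm + (B - (A * C - A) * (A * B)) * hd

lemma dk_deriv {R : Type*} [CommRing R] (x y : R) (h : x * y = 1) (k : ℕ) :
    (eval (x + y) (derivative (dickson 1 (1 : R) k)) * (x - y) = k * (x ^ k - y ^ k)) ∧
    (eval (x + y) (derivative (dickson 1 (1 : R) (k + 1))) * (x - y)
      = (k + 1 : ℕ) * (x ^ (k + 1) - y ^ (k + 1))) := by
  induction k with
  | zero =>
    constructor
    · have : (dickson 1 (1 : R) 0) = C 2 := by
        rw [dickson_zero]; norm_num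
        rfl
      rw [this]; simp
    · simp
  | succ k ih =>
    refine ⟨ih.2, ?_⟩
    have e := dickson_one_one_eval_add_inv x y h (k + 1)
    have h1 := ih.1
    have h2 := ih.2
    rw [show k + 1 + 1 = k + 2 by ring, dickson_add_two]
    simp only [map_one, one_mul, derivative_sub, derivative_mul, derivative_X, eval_sub, eval_add,
      eval_mul, eval_X, one_mul]
    rw [e]
    push_cast at *
    simp only [pow_succ] at *
    linear_combination (x + y) * h2 - h1 + (k : R) * (x ^ k - y ^ k) * h

lemma pow_three_terms {R : Type*} [CommRing R] (v : R) (n : ℕ) :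
    ∃ c, (1 + v) ^ n = 1 + n * v + (n.choose 2 : ℕ) * v ^ 2 + v ^ 3 * c := by
  induction n with
  | zero => exact ⟨0, by simp⟩
  | succ n ih =>
    obtain ⟨c, hc⟩ := ih
    refine ⟨c + v * c + (n.choose 2 : ℕ), ?_⟩
    rw [pow_succ, hc, Nat.choose_succ_succ' n 1]
    push_cast
    simp only [Nat.choose_one_right]
    ring

lemma ramified_pow {R : Type*} [CommRing R] (p : ℕ) (hodd : Odd p) (w t : R)
    (hw : (w - 1) ^ 2 = p * t) (j : ℕ) : ∃ r, w ^ (p ^ j) - 1 = p ^ j * (w - 1) * r := by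
  induction j with
  | zero => exact ⟨1, by simp⟩
  | succ j ih =>
    obtain ⟨r, hr⟩ := ih
    obtain ⟨c, hc⟩ := pow_three_terms (w ^ (p ^ j) - 1) p
    obtain ⟨b, hb⟩ := hodd
    have hch : p.choose 2 = p * b := by
      rw [Nat.choose_two_right, hb]
      simp only [Nat.add_sub_cancel]
      rw [show (2 * b + 1) * (2 * b) = 2 * ((2*b+1) * b) by ring]
      simp
    rw [add_sub_cancel, hch] at hc
    refine ⟨r * (1 + b * (w ^ p ^ j - 1) + t * (p ^ j * r) ^ 2 * c), ?_⟩
    rw [pow_succ, pow_mul, hc]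
    have : (w ^ p ^ j - 1) ^ 2 = p * t * (p ^ j * r) ^ 2 := by rw [hr, ← hw]; ring
    push_cast
    have h3 : (w ^ p ^ j - 1) ^ 3 = (w ^ p ^ j - 1) * (p * t * (p ^ j * r) ^ 2) := by
      rw [← this]; ring
    rw [h3]
    linear_combination (p + p * b * (w ^ p ^ j - 1) + p * t * (p ^ j * r) ^ 2 * c) * hr

lemma unit_or_dvd (p e : ℕ) (hp : p.Prime) (z : ZMod (p ^ e)) :
    IsUnit z ∨ (p : ZMod (p ^ e)) ∣ z := by
  have : NeZero (p ^ e) := ⟨(pow_pos hp.pos e).ne'⟩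
  by_cases h : p ∣ z.val
  · right
    obtain ⟨c, hc⟩ := h
    refine ⟨c, ?_⟩
    rw [← Nat.cast_mul, ← hc, ZMod.natCast_zmod_val]
  · left
    rw [← ZMod.natCast_zmod_val z, ZMod.isUnit_iff_coprime]
    exact (((hp.coprime_iff_not_dvd).2 h).symm).pow_right e

lemma dickson_zmod_eval (n k : ℕ) (a : ℤ) :
    eval (a : ZMod n) (dickson 1 (1 : ZMod n) k) = ((eval a (dickson 1 (1 : ℤ) k) : ℤ) : ZMod n) := by
  rw [← map_one (Int.castRingHom (ZMod n)), ← map_dickson]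
  exact eval_intCast_map (Int.castRingHom (ZMod n)) _ a

lemma dickson_p (p e : ℕ) (hp : p.Prime) (u : ZMod (p ^ e)) :
    (p : ZMod (p ^ e)) ∣ eval u (dickson 1 (1 : ZMod (p ^ e)) p) - u := by
  have : Fact p.Prime := ⟨hp⟩
  obtain ⟨a, rfl⟩ := ZMod.intCast_surjective u
  rw [dickson_zmod_eval]
  have h : (p : ℤ) ∣ eval a (dickson 1 (1 : ℤ) p) - a := by
    rw [← ZMod.intCast_zmod_eq_zero_iff_dvd]
    push_cast
    rw [← dickson_zmod_eval, dickson_one_one_zmod_p]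
    simp
  obtain ⟨c, hc⟩ := h
  exact ⟨c, by exact_mod_cast congrArg (Int.cast : ℤ → ZMod (p ^ e)) hc⟩

lemma pow_sub_one_dvd {R : Type*} [CommRing R] (x : R) {a b : ℕ} (h : a ∣ b) :
    x ^ a - 1 ∣ x ^ b - 1 := by
  obtain ⟨c, rfl⟩ := h
  rw [pow_mul]
  simpa using sub_dvd_pow_sub_pow (x ^ a) 1 c

lemma quad_ext {S : Type} [CommRing S] (u : S) : ∃ (R : Type) (_ : CommRing R) (f : S →+* R)
    (x y : R), Function.Injective f ∧ x * y = 1 ∧ f u = x + y := by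
  refine ⟨QuadraticAlgebra S (-1) u, inferInstance, algebraMap S _, ⟨0, 1⟩, ⟨u, -1⟩,
    QuadraticAlgebra.algebraMap_injective, ?_, ?_⟩
  · ext <;> simp [QuadraticAlgebra.re_one, QuadraticAlgebra.im_one]
  · ext <;> simp

/-- periodicity -/
lemma dk_period (p e b l : ℕ) (hp : p.Prime) (hb : p = 2 * b + 1) (he : 1 ≤ e)
    (hl : l = p ^ (e - 1) * (2 * (b * (b + 1)))) (k m : ℕ) (hmk : m ≤ k)
    (h : l ∣ k - m ∨ l ∣ k + m) (u : ZMod (p ^ e)) :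
    eval u (dickson 1 (1 : ZMod (p ^ e)) k) = eval u (dickson 1 (1 : ZMod (p ^ e)) m) := by
  obtain ⟨R, _, f, x, y, hinj, hxy, hu⟩ := quad_ext u
  have hD : ∀ n, f (eval u (dickson 1 (1 : ZMod (p ^ e)) n)) = x ^ n + y ^ n := by
    intro n
    rw [← dickson_one_one_eval_add_inv x y hxy, ← hu, ← map_one f, ← map_dickson, eval_map_apply]
  have hpe : (p : R) ^ e = 0 := by
    have : (p : ZMod (p ^ e)) ^ e = 0 := by
      have := ZMod.natCast_self (p ^ e)
      push_cast at this
      exact this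
    have h2 := congrArg f this
    rwa [map_pow, map_natCast, map_zero] at h2
  apply hinj
  rw [hD, hD, ← sub_eq_zero, dk_factor x y hxy k m hmk]
  obtain ⟨e, rfl⟩ : ∃ e', e = e' + 1 := ⟨e - 1, by omega⟩
  simp only [Nat.add_sub_cancel] at hl
  have hxu : (x ^ 2 - 1) ^ 2 = f (u ^ 2 - 4) * x ^ 2 := by
    rw [map_sub, map_pow, hu]
    simp only [map_ofNat]
    linear_combination (-x ^ 2 * 2 - 1 - x * y) * hxy
  rcases unit_or_dvd p (e + 1) hp (u ^ 2 - 4) with hunit | ⟨t, ht⟩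
  · -- unramified
    have hpx : IsUnit x := IsUnit.of_mul_eq_one _ hxy
    have hc2 : IsUnit (x ^ 2 - 1) := by
      have : IsUnit ((x ^ 2 - 1) ^ 2) := by
        rw [hxu]; exact (hunit.map f).mul (hpx.pow 2)
      exact (isUnit_pow_iff two_ne_zero).1 this
    have hAB : (p : R) ∣ (x ^ (p - 1) - 1) * (x ^ (p + 1) - 1) := by
      have h1 := dk_factor x y hxy p 1 hp.one_lt.le
      obtain ⟨c, hc⟩ := dickson_p p (e + 1) hp u
      have h2 := congrArg f hc
      rw [map_sub, hD, hu, map_mul, map_natCast] at h2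
      rw [pow_one, pow_one, h2] at h1
      refine ⟨x ^ p * f c, ?_⟩
      have h3 : x ^ p * y ^ p = 1 := by rw [← mul_pow, hxy, one_pow]
      linear_combination (-x ^ p) * h1 - ((x ^ (p - 1) - 1) * (x ^ (p + 1) - 1)) * h3
    have hL : (p : R) ∣ x ^ (2 * (b * (b + 1))) - 1 := by
      obtain ⟨a', ha'⟩ : x ^ (p - 1) - 1 ∣ x ^ (2 * (b * (b + 1))) - 1 :=
        pow_sub_one_dvd x ⟨b + 1, by rw [hb]; simp; ring⟩
      obtain ⟨b', hb'⟩ : x ^ (p + 1) - 1 ∣ x ^ (2 * (b * (b + 1))) - 1 :=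
        pow_sub_one_dvd x ⟨b, by rw [hb]; ring⟩
      have hcu : IsUnit (x ^ (p - 1) * (x ^ 2 - 1)) := (hpx.pow _).mul hc2
      rw [← hcu.dvd_mul_right]
      have hpp : x ^ (p - 1) * (x ^ 2 - 1) = (x ^ (p + 1) - 1) - (x ^ (p - 1) - 1) := by
        rw [show p + 1 = (p - 1) + 2 by have := hp.one_lt; omega, pow_add]; ring
      rw [hpp]
      have : (x ^ (2 * (b * (b + 1))) - 1) * ((x ^ (p + 1) - 1) - (x ^ (p - 1) - 1))
        = ((x ^ (p - 1) - 1) * (x ^ (p + 1) - 1)) * (a' - b') := by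
        linear_combination (x ^ (p + 1) - 1) * ha' - (x ^ (p - 1) - 1) * hb'
      rw [this]
      exact hAB.mul_right _
    have hl1 : x ^ l - 1 = 0 := by
      have := dvd_sub_pow_of_dvd_sub (b := 1) hL e
      rw [hpe, zero_dvd_iff, one_pow, ← pow_mul, mul_comm _ (p ^ e), ← hl] at this
      exact this
    rcases h with h | h
    · have := pow_sub_one_dvd x h
      rw [hl1, zero_dvd_iff] at this
      rw [this]; ring
    · have := pow_sub_one_dvd x h
      rw [hl1, zero_dvd_iff] at this
      rw [this]; ring
  · -- ramified
    have hw : (x ^ 2 - 1) ^ 2 = p * (f t * x ^ 2) := by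
      rw [hxu, ht, map_mul, map_natCast]; ring
    obtain ⟨r, hr⟩ := ramified_pow p ⟨b, hb⟩ (x ^ 2) _ hw e
    rw [← pow_mul] at hr
    have h1 : 2 * p ^ e ∣ l := ⟨b * (b + 1), by rw [hl]; ring⟩
    have key : (x ^ (2 * p ^ e) - 1) * (x ^ 2 - 1) = 0 := by
      rw [hr]
      rw [pow_succ] at hpe
      linear_combination p ^ e * r * hw + f t * x ^ 2 * r * hpe
    have key2 : ∀ i j : ℕ, 2 * p ^ e ∣ i → 2 ∣ j → (x ^ i - 1) * (x ^ j - 1) = 0 := by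
      intro i j hi hj
      have := mul_dvd_mul (pow_sub_one_dvd x hi) (pow_sub_one_dvd x hj)
      rwa [key, zero_dvd_iff] at this
    rcases h with h | h
    · rw [key2 _ _ (h1.trans h), mul_zero]
      have := ((Dvd.intro _ rfl).trans h1).trans h
      omega
    · rw [mul_comm (_ - _), key2 _ _ (h1.trans h), mul_zero]
      have := ((Dvd.intro _ rfl).trans h1).trans h
      omega

lemma nec_split (p e k : ℕ) (hp : p.Prime) (hp5 : 5 ≤ p) (he : 1 ≤ e) (hk : 1 ≤ k)
    (h : ∀ u : ZMod (p ^ e), eval u (dickson 1 (1 : ZMod (p ^ e)) k) = u) :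
    p ^ (e - 1) * (p - 1) ∣ k - 1 ∨ p ^ (e - 1) * (p - 1) ∣ k + 1 := by
  obtain ⟨e, rfl⟩ : ∃ e', e = e' + 1 := ⟨e - 1, by omega⟩
  simp only [Nat.add_sub_cancel]
  have : NeZero (p ^ (e + 1)) := ⟨(pow_pos hp.pos _).ne'⟩
  have : Fact (1 < p ^ (e + 1)) := ⟨Nat.one_lt_pow (by omega) hp.one_lt⟩
  have hcyc := ZMod.isCyclic_units_of_prime_pow p hp (by omega) (e + 1)
  obtain ⟨g, hg⟩ := hcyc.exists_ofOrder_eq_natCard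
  rw [Nat.card_eq_fintype_card, ZMod.card_units_eq_totient, Nat.totient_prime_pow_succ hp] at hg
  have hpe : (p : ZMod (p ^ (e + 1))) ^ (e + 1) = 0 := by
    have := ZMod.natCast_self (p ^ (e + 1))
    push_cast at this
    exact this
  have hpn : ¬ IsUnit (p : ZMod (p ^ (e + 1))) := by
    intro hu
    have := hu.pow (e + 1)
    rw [hpe] at this
    exact not_isUnit_zero this
  have hord : ∀ n : ℕ, (g : ZMod (p ^ (e + 1))) ^ n - 1 = 0 → p ^ e * (p - 1) ∣ n := by
    intro n hn
    rw [← hg]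
    apply orderOf_dvd_of_pow_eq_one
    ext
    push_cast
    exact sub_eq_zero.1 hn
  have hxy : (g : ZMod (p ^ (e + 1))) * ((g⁻¹ : (ZMod (p ^ (e + 1)))ˣ) : ZMod (p ^ (e + 1))) = 1 := by
    simp
  have h1 := h ((g : ZMod (p ^ (e + 1))) + ((g⁻¹ : (ZMod (p ^ (e + 1)))ˣ) : ZMod (p ^ (e + 1))))
  rw [dickson_one_one_eval_add_inv _ _ hxy, ← sub_eq_zero] at h1
  have h2 := dk_factor _ _ hxy k 1 hk
  rw [pow_one, pow_one, h1] at h2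
  have h3 : ((g : ZMod (p ^ (e + 1))) ^ (k - 1) - 1) * ((g : ZMod (p ^ (e + 1))) ^ (k + 1) - 1) = 0 :=
    ((g⁻¹).isUnit.pow k).mul_right_eq_zero.1 h2.symm
  rcases unit_or_dvd p (e + 1) hp ((g : ZMod (p ^ (e + 1))) ^ (k - 1) - 1) with hA | hA
  · exact Or.inr (hord _ (hA.mul_right_eq_zero.1 h3))
  rcases unit_or_dvd p (e + 1) hp ((g : ZMod (p ^ (e + 1))) ^ (k + 1) - 1) with hB | hB
  · exact Or.inl (hord _ (hB.mul_left_eq_zero.1 h3))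
  exfalso
  have h4 : (p : ZMod (p ^ (e + 1))) ∣ (g : ZMod (p ^ (e + 1))) ^ (k - 1) * ((g : ZMod (p ^ (e + 1))) ^ 2 - 1) := by
    have := dvd_sub hB hA
    convert this using 1
    obtain ⟨k, rfl⟩ : ∃ k', k = k' + 1 := ⟨k - 1, by omega⟩
    simp only [Nat.add_sub_cancel, pow_succ]
    ring
  have h5 : (p : ZMod (p ^ (e + 1))) ∣ (g : ZMod (p ^ (e + 1))) ^ 2 - 1 :=
    (g.isUnit.pow (k - 1)).dvd_mul_left.1 h4
  have h6 := dvd_sub_pow_of_dvd_sub (b := 1) h5 e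
  rw [hpe, zero_dvd_iff, one_pow, ← pow_mul] at h6
  have h7 := hord _ h6
  rw [mul_comm 2] at h7
  have h8 := Nat.dvd_of_mul_dvd_mul_left (pow_pos hp.pos e) h7
  have := Nat.le_of_dvd (by norm_num) h8
  omega

lemma nec_nonsplit (p e k : ℕ) (hp : p.Prime) (hp5 : 5 ≤ p) (he : 1 ≤ e) (hk : 1 ≤ k)
    (h : ∀ u : ZMod (p ^ e), eval u (dickson 1 (1 : ZMod (p ^ e)) k) = u) :
    (p + 1 ∣ k - 1 ∧ (1 < e → p ∣ k - 1)) ∨ (p + 1 ∣ k + 1 ∧ (1 < e → p ∣ k + 1)) := by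
  have : Fact p.Prime := ⟨hp⟩
  have hZ : ∀ a : ℤ, (p : ℤ) ^ e ∣ eval a (dickson 1 (1 : ℤ) k - X) := by
    intro a
    have h1 := h a
    rw [dickson_zmod_eval] at h1
    have : ((p ^ e : ℕ) : ℤ) ∣ eval a (dickson 1 (1 : ℤ) k - X) := by
      rw [← ZMod.intCast_zmod_eq_zero_iff_dvd]
      simp [h1]
    exact_mod_cast this
  have hZp : ∀ a : ℤ, (p : ℤ) ∣ eval a (dickson 1 (1 : ℤ) k - X) := fun a =>
    (dvd_pow_self _ (by omega)).trans (hZ a)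
  have hZd : 1 < e → ∀ a : ℤ, (p : ℤ) ∣ eval a (derivative (dickson 1 (1 : ℤ) k - X)) := by
    intro he a
    obtain ⟨c, hc⟩ := binomExpansion (dickson 1 (1 : ℤ) k - X) a p
    have h2 : ∀ a : ℤ, (p : ℤ) ^ 2 ∣ eval a (dickson 1 (1 : ℤ) k - X) := fun a =>
      (pow_dvd_pow _ (by omega)).trans (hZ a)
    have h3 : (p : ℤ) * p ∣ p * eval a (derivative (dickson 1 (1 : ℤ) k - X)) := by
      obtain ⟨r, hr⟩ := h2 a
      obtain ⟨s, hs⟩ := h2 (a + p)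
      exact ⟨s - r - c, by linear_combination hs - hr - hc⟩
    exact Int.dvd_of_mul_dvd_mul_left (by exact_mod_cast hp.ne_zero) h3
  let K := GaloisField p 2
  have hcardK : Nat.card K = p ^ 2 := GaloisField.card p 2 (by norm_num)
  have : Finite K := inferInstance
  obtain ⟨g, hg⟩ := (inferInstance : IsCyclic Kˣ).exists_ofOrder_eq_natCard
  have hcu : Nat.card Kˣ = (p - 1) * (p + 1) := by
    rw [Nat.card_units, hcardK]
    obtain ⟨q, rfl⟩ : ∃ q, p = q + 1 := ⟨p - 1, by omega⟩
    simp only [Nat.add_sub_cancel]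
    rw [show (q + 1) ^ 2 = q * (q + 1 + 1) + 1 by ring]; simp
  rw [hcu] at hg
  have hho : orderOf (g ^ (p - 1)) = p + 1 := by
    rw [orderOf_pow_of_dvd (by omega) (by rw [hg]; exact Dvd.intro _ rfl), hg]
    exact Nat.mul_div_cancel_left _ (by omega)
  generalize g ^ (p - 1) = hh at hho
  set x : K := (hh : K) with hx
  set y : K := ((hh⁻¹ : Kˣ) : K) with hy
  have hxy : x * y = 1 := by simp [hx, hy]
  have hord : ∀ n : ℕ, x ^ n - 1 = 0 → p + 1 ∣ n := by
    intro n hn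
    rw [← hho]
    apply orderOf_dvd_of_pow_eq_one
    ext
    push_cast
    exact sub_eq_zero.1 hn
  have hxp : x ^ (p + 1) = 1 := by
    have := pow_orderOf_eq_one hh
    rw [hho] at this
    rw [hx, ← Units.val_pow_eq_pow_val, this, Units.val_one]
  have hxp' : x ^ p = y := by
    rw [pow_succ] at hxp
    linear_combination y * hxp - x ^ p * hxy
  have hyp : y ^ p = x := by
    have h0 : x ^ p * y ^ p = 1 := by rw [← mul_pow, hxy, one_pow]
    rw [hxp'] at h0
    linear_combination x * h0 - y ^ p * hxy
  have hbot : x + y ∈ (⊥ : Subfield K) := by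
    rw [Subfield.mem_bot_iff_pow_eq_self K p, add_pow_char, hxp', hyp, add_comm]
  rw [mem_bot_iff_intCast p] at hbot
  obtain ⟨a, ha⟩ := hbot
  have hcast : ∀ F : ℤ[X], eval (x + y) (F.map (Int.castRingHom K)) = ((eval a F : ℤ) : K) := by
    intro F
    rw [← ha]
    exact eval_intCast_map (Int.castRingHom K) _ a
  have hpK : ∀ n : ℤ, (p : ℤ) ∣ n → (n : K) = 0 := fun n hn =>
    (CharP.intCast_eq_zero_iff K p n).2 hn
  have hmap : (dickson 1 (1 : ℤ) k).map (Int.castRingHom K) = dickson 1 (1 : K) k := by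
    rw [map_dickson, map_one]
  have hD := hpK _ (hZp a)
  rw [← hcast, Polynomial.map_sub, hmap, map_X, eval_sub, eval_X,
    dickson_one_one_eval_add_inv _ _ hxy] at hD
  have h2 := dk_factor _ _ hxy k 1 hk
  rw [pow_one, pow_one, hD] at h2
  have hy0 : y ≠ 0 := right_ne_zero_of_mul_eq_one hxy
  have h3 := (mul_eq_zero.1 h2.symm).resolve_left (pow_ne_zero _ hy0)
  have hne : x - y ≠ 0 := by
    intro h0
    have : p + 1 ∣ 2 := hord 2 (by linear_combination x * h0 + hxy)
    have := Nat.le_of_dvd (by norm_num) this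
    omega
  have hder : 1 < e → x - y = k * (x ^ k - y ^ k) := by
    intro he
    have h4 := hpK _ (hZd he a)
    rw [← hcast, ← derivative_map, Polynomial.map_sub, hmap, map_X, derivative_sub, derivative_X,
      eval_sub, eval_one] at h4
    have := (dk_deriv x y hxy k).1
    linear_combination this - (x - y) * h4
  obtain ⟨n, rfl⟩ : ∃ n, k = n + 1 := ⟨k - 1, by omega⟩
  have hnn : x ^ n * y ^ n = 1 := by rw [← mul_pow, hxy, one_pow]
  simp only [Nat.add_sub_cancel] at h3 ⊢
  rcases mul_eq_zero.1 h3 with h3 | h3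
  · left
    refine ⟨hord _ h3, fun he => ?_⟩
    have h5 := hder he
    have hx1 : x ^ n = 1 := sub_eq_zero.1 h3
    have hy1 : y ^ n = 1 := by simpa [hx1] using hnn
    rw [pow_succ, pow_succ, hx1, hy1, one_mul, one_mul] at h5
    have h6 : (n : K) * (x - y) = 0 := by push_cast at h5; linear_combination -h5
    exact (CharP.cast_eq_zero_iff K p n).1 ((mul_eq_zero.1 h6).resolve_right hne)
  · right
    refine ⟨hord _ h3, fun he => ?_⟩
    have h5 := hder he
    have hx1 : x ^ (n + 1) = y := by
      rw [pow_succ] at h3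
      linear_combination y * h3 - x ^ (n + 1) * hxy
    have hy1 : y ^ (n + 1) = x := by
      have h0 : x ^ (n + 1) * y ^ (n + 1) = 1 := by rw [← mul_pow, hxy, one_pow]
      rw [hx1] at h0
      linear_combination x * h0 - y ^ (n + 1) * hxy
    rw [hx1, hy1] at h5
    have h6 : ((n + 1 + 1 : ℕ) : K) * (x - y) = 0 := by push_cast at *; linear_combination h5
    exact (CharP.cast_eq_zero_iff K p _).1 ((mul_eq_zero.1 h6).resolve_right hne)

/-- The Dickson function on residues modulo `l`, as a monoid homomorphism. -/
noncomputable def dkHom (p e b l : ℕ) (hp : p.Prime) (hb : p = 2 * b + 1) (he : 1 ≤ e)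
    (hl : l = p ^ (e - 1) * (2 * (b * (b + 1)))) :
    (ZMod l)ˣ →* Function.End (ZMod (p ^ e)) where
  toFun a := fun u => eval u (dickson 1 (1 : ZMod (p ^ e)) (a : ZMod l).val)
  map_one' := by
    funext u
    have hb1 : 1 ≤ b := by have := hp.two_le; omega
    have h1 : 1 < l := by
      rw [hl]
      have h1 := pow_pos hp.pos (e - 1)
      have h2 : 1 ≤ b * (b + 1) := Nat.mul_pos hb1 (by omega)
      nlinarith
    have : Fact (1 < l) := ⟨h1⟩
    simp only [Units.val_one, ZMod.val_one, dickson_one, eval_X]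
    rfl
  map_mul' a c := by
    funext u
    change _ = eval (eval u (dickson 1 (1 : ZMod (p ^ e)) (c : ZMod l).val))
      (dickson 1 (1 : ZMod (p ^ e)) (a : ZMod l).val)
    rw [← eval_comp, ← dickson_one_one_mul]
    symm
    apply dk_period p e b l hp hb he hl
    · rw [Units.val_mul, ZMod.val_mul]; exact Nat.mod_le _ _
    · left
      rw [Units.val_mul, ZMod.val_mul]
      exact Nat.dvd_sub_mod _

lemma lcm_dvd_aux (b n : ℤ) (h1 : 2 * b ∣ n) (h2 : 2 * b + 2 ∣ n) : 2 * (b * (b + 1)) ∣ n := by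
  obtain ⟨c, hc⟩ := h1
  obtain ⟨d, hd⟩ := h2
  -- n = (b + 1) n - b n
  exact ⟨c - d, by linear_combination (b + 1) * hc - b * hd⟩

lemma coprime_aux (p b : ℕ) (hp : p.Prime) (hb : p = 2 * b + 1) (hb2 : 2 ≤ b) :
    Nat.Coprime p (2 * (b * (b + 1))) := by
  rw [hp.coprime_iff_not_dvd, hp.dvd_mul, hp.dvd_mul]
  rintro (h | h | h) <;> have := Nat.le_of_dvd (by omega) h <;> omega

lemma l_big (p e b l : ℕ) (hp : p.Prime) (hb2 : 2 ≤ b)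
    (hl : l = p ^ (e - 1) * (2 * (b * (b + 1)))) : 2 * b + 2 < l := by
  have h1 := pow_pos hp.pos (e - 1)
  have h2 : 2 * (b * (b + 1)) ≤ l := by
    rw [hl]; exact Nat.le_mul_of_pos_left _ h1
  nlinarith

lemma mem_ker_iff (p e b l : ℕ) (hp : p.Prime) (hb : p = 2 * b + 1) (he : 1 ≤ e)
    (hl : l = p ^ (e - 1) * (2 * (b * (b + 1)))) (a : (ZMod l)ˣ) :
    a ∈ (dkHom p e b l hp hb he hl).toHomUnits.ker ↔
      ∀ u : ZMod (p ^ e), eval u (dickson 1 (1 : ZMod (p ^ e)) (a : ZMod l).val) = u := by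
  rw [MonoidHom.mem_ker, Units.ext_iff]
  exact funext_iff

lemma neg_one_mem (p e b l : ℕ) (hp : p.Prime) (hb : p = 2 * b + 1) (hb2 : 2 ≤ b) (he : 1 ≤ e)
    (hl : l = p ^ (e - 1) * (2 * (b * (b + 1)))) : (-1 : (ZMod l)ˣ) ∈ (dkHom p e b l hp hb he hl).toHomUnits.ker := by
  rw [mem_ker_iff]
  intro u
  have hbig := l_big p e b l hp hb2 hl
  have : NeZero l := ⟨by omega⟩
  have hd : l ∣ ((-1 : (ZMod l)ˣ) : ZMod l).val + 1 := by
    rw [← ZMod.natCast_eq_zero_iff]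
    push_cast
    rw [ZMod.natCast_zmod_val]
    ring
  have := Nat.le_of_dvd (by omega) hd
  rw [dk_period p e b l hp hb he hl _ 1 (by omega) (Or.inr hd) u, dickson_one, eval_X]

lemma ker_val_pos (p e b l : ℕ) (hp : p.Prime) (hb2 : 2 ≤ b)
    (hl : l = p ^ (e - 1) * (2 * (b * (b + 1)))) (a : (ZMod l)ˣ) : 1 ≤ (a : ZMod l).val := by
  have hbig := l_big p e b l hp hb2 hl
  have : Fact (1 < l) := ⟨by omega⟩
  have : NeZero l := ⟨by omega⟩
  rw [Nat.one_le_iff_ne_zero, Ne, ZMod.val_eq_zero]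
  exact a.ne_zero

lemma eq_of_dvd (p e b l : ℕ) (hp : p.Prime) (hb2 : 2 ≤ b)
    (hl : l = p ^ (e - 1) * (2 * (b * (b + 1)))) (a : (ZMod l)ˣ) (n : ℤ) (h : (l : ℤ) ∣ ((a : ZMod l).val : ℤ) - n) :
    (a : ZMod l) = n := by
  have hbig := l_big p e b l hp hb2 hl
  have : NeZero l := ⟨by omega⟩
  rw [← ZMod.intCast_zmod_eq_zero_iff_dvd] at h
  push_cast at h
  rw [ZMod.natCast_zmod_val] at h
  exact sub_eq_zero.1 h

lemma two_ne (p e b l : ℕ) (hp : p.Prime) (hb2 : 2 ≤ b)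
    (hl : l = p ^ (e - 1) * (2 * (b * (b + 1)))) : (2 : ZMod l) ≠ 0 := by
  have hbig := l_big p e b l hp hb2 hl
  intro h
  have : ((2 : ℕ) : ZMod l) = 0 := by exact_mod_cast h
  rw [ZMod.natCast_eq_zero_iff] at this
  have := Nat.le_of_dvd (by norm_num) this
  omega

lemma card_ker_gt (p e b l : ℕ) (hp : p.Prime) (hb : p = 2 * b + 1) (hb2 : 2 ≤ b) (he : 1 ≤ e)
    (hl : l = p ^ (e - 1) * (2 * (b * (b + 1)))) (he1 : 1 < e) : Nat.card (dkHom p e b l hp hb he hl).toHomUnits.ker = 2 := by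
  have hset : ((dkHom p e b l hp hb he hl).toHomUnits.ker : Set (ZMod l)ˣ) = {1, -1} := by
    ext a
    simp only [SetLike.mem_coe, Set.mem_insert_iff, Set.mem_singleton_iff]
    constructor
    · intro ha
      rw [mem_ker_iff] at ha
      have hk := ker_val_pos p e b l hp hb2 hl a
      have h1 := nec_split p e _ hp (by omega) he hk ha
      have h2 := nec_nonsplit p e _ hp (by omega) he hk ha
      have e1 := eq_of_dvd p e b l hp hb2 hl a 1
      have e2 := eq_of_dvd p e b l hp hb2 hl a (-1)
      generalize (a : ZMod l).val = k at *
      zify [hk] at h1 h2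
      rw [Nat.cast_sub (by omega)] at h1
      have hpb : (p : ℤ) = 2 * b + 1 := by exact_mod_cast hb
      have hpp : (p : ℤ) ∣ p ^ (e - 1) * (p - (1 : ℕ)) := (dvd_pow_self _ (by omega)).mul_right _
      have comb : ∀ n : ℤ, (p : ℤ) ^ (e - 1) * (p - (1 : ℕ)) ∣ n → (p : ℤ) + 1 ∣ n → (l : ℤ) ∣ n := by
        intro n hn1 hn2
        rw [hl]
        push_cast
        apply IsCoprime.mul_dvd
        · exact_mod_cast Nat.isCoprime_iff_coprime.2 ((coprime_aux p b hp hb hb2).pow_left (e - 1))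
        · exact (Dvd.intro _ rfl).trans hn1
        · apply lcm_dvd_aux
          · have h0 : (p : ℤ) - (1 : ℕ) ∣ n := (Dvd.intro_left _ rfl).trans hn1
            rw [hpb] at h0
            simpa using h0
          · rw [hpb] at hn2
            convert hn2 using 1
            ring
      have no2 : (p : ℤ) ∣ k - 1 → (p : ℤ) ∣ k + 1 → False := by
        intro h h'
        have h3 := dvd_sub h' h
        have h4 := Int.le_of_dvd (by ring_nf; norm_num) h3
        omega
      rcases h1 with h1 | h1 <;> rcases h2 with ⟨h2, h3⟩ | ⟨h2, h3⟩
      · left; ext; simpa using e1 (comb _ h1 h2)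
      · exact (no2 (hpp.trans h1) (h3 (by exact_mod_cast he1))).elim
      · exact (no2 (h3 (by exact_mod_cast he1)) (hpp.trans h1)).elim
      · right; ext; simpa using e2 (by simpa using comb _ h1 h2)
    · rintro (rfl | rfl)
      · exact one_mem _
      · exact neg_one_mem p e b l hp hb hb2 he hl
  have : Nat.card (dkHom p e b l hp hb he hl).toHomUnits.ker = ({1, -1} : Set (ZMod l)ˣ).ncard := by
    rw [← hset]; rfl
  rw [this, Set.ncard_pair]
  intro h
  apply two_ne p e b l hp hb2 hl
  have h := congrArg Units.val h
  simp only [Units.val_one, Units.val_neg] at h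
  linear_combination h

lemma card_ker_one (p e b l : ℕ) (hp : p.Prime) (hb : p = 2 * b + 1) (hb2 : 2 ≤ b) (he : 1 ≤ e)
    (hl : l = p ^ (e - 1) * (2 * (b * (b + 1)))) (he1 : e = 1) : Nat.card (dkHom p e b l hp hb he hl).toHomUnits.ker = 4 := by
  have hbig := l_big p e b l hp hb2 hl
  have hlz : NeZero l := ⟨by omega⟩
  have hcop : Nat.Coprime p l := by
    rw [hl, he1]; simpa using coprime_aux p b hp hb hb2
  obtain ⟨z, hz⟩ : ∃ z : (ZMod l)ˣ, (z : ZMod l) = (p : ℕ) :=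
    ⟨ZMod.unitOfCoprime p hcop, rfl⟩
  have hzker : z ∈ (dkHom p e b l hp hb he hl).toHomUnits.ker := by
    rw [mem_ker_iff]
    intro u
    rw [hz, ZMod.val_natCast, ← dk_period p e b l hp hb he hl p (p % l) (Nat.mod_le _ _)
      (Or.inl (Nat.dvd_sub_mod _)) u]
    have h1 := dickson_p p e hp u
    have h0 : (p : ZMod (p ^ e)) = 0 := by
      have := ZMod.natCast_self (p ^ e)
      rw [← this, he1, pow_one]
    rw [h0, zero_dvd_iff] at h1
    exact sub_eq_zero.1 h1
  have hset : ((dkHom p e b l hp hb he hl).toHomUnits.ker : Set (ZMod l)ˣ) = {1, -1, z, -z} := by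
    ext a
    simp only [SetLike.mem_coe, Set.mem_insert_iff, Set.mem_singleton_iff]
    constructor
    · intro ha
      rw [mem_ker_iff] at ha
      have hk := ker_val_pos p e b l hp hb2 hl a
      have h1 := nec_split p e _ hp (by omega) he hk ha
      have h2 := nec_nonsplit p e _ hp (by omega) he hk ha
      have e1 := eq_of_dvd p e b l hp hb2 hl a 1
      have e2 := eq_of_dvd p e b l hp hb2 hl a (-1)
      have e3 := eq_of_dvd p e b l hp hb2 hl a p
      have e4 := eq_of_dvd p e b l hp hb2 hl a (-p)
      generalize (a : ZMod l).val = k at *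
      zify [hk] at h1 h2
      rw [Nat.cast_sub (by omega)] at h1
      have hpb : (p : ℤ) = 2 * b + 1 := by exact_mod_cast hb
      have comb : ∀ n : ℤ, (p : ℤ) - 1 ∣ n → (p : ℤ) + 1 ∣ n → (l : ℤ) ∣ n := by
        intro n hn1 hn2
        rw [hl, he1]
        push_cast
        simp only [pow_zero, one_mul]
        apply lcm_dvd_aux
        · rw [hpb] at hn1
          convert hn1 using 1
          ring
        · rw [hpb] at hn2
          convert hn2 using 1
          ring
      have h1' : (p : ℤ) - 1 ∣ k - 1 ∨ (p : ℤ) - 1 ∣ k + 1 := by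
        simpa [he1] using h1
      rcases h1' with h1 | h1 <;> rcases h2 with ⟨h2, h3⟩ | ⟨h2, h3⟩
      · left; ext; simpa using e1 (comb _ h1 h2)
      · right; right; left; ext; rw [hz]
        refine (e3 (comb _ ?_ ?_)).trans (by simp)
        · obtain ⟨c, hc⟩ := h1; exact ⟨c - 1, by linear_combination hc⟩
        · obtain ⟨c, hc⟩ := h2; exact ⟨c - 1, by linear_combination hc⟩
      · right; right; right; ext; rw [Units.val_neg, hz]
        refine (e4 (comb _ ?_ ?_)).trans (by simp)
        · obtain ⟨c, hc⟩ := h1; exact ⟨c + 1, by linear_combination hc⟩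
        · obtain ⟨c, hc⟩ := h2; exact ⟨c + 1, by linear_combination hc⟩
      · right; left; ext; simpa using e2 (by simpa using comb _ h1 h2)
    · have hneg := neg_one_mem p e b l hp hb hb2 he hl
      rintro (rfl | rfl | rfl | rfl)
      · exact one_mem _
      · exact hneg
      · exact hzker
      · have := mul_mem hneg hzker
        rwa [neg_one_mul] at this
  have : Nat.card (dkHom p e b l hp hb he hl).toHomUnits.ker
      = ({1, -1, z, -z} : Set (ZMod l)ˣ).ncard := by
    rw [← hset]; rfl
  have h2 := two_ne p e b l hp hb2 hl
  have h11 : (1 : (ZMod l)ˣ) ≠ -1 := by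
    intro h
    apply h2
    have h := congrArg Units.val h
    simp only [Units.val_one, Units.val_neg] at h
    linear_combination h
  have hz1 : z ≠ 1 := by
    intro h
    have h := congrArg Units.val h
    rw [hz, Units.val_one] at h
    have h3 : (((2 * b : ℕ)) : ZMod l) = 0 := by
      rw [hb] at h; push_cast at h ⊢; linear_combination h
    rw [ZMod.natCast_eq_zero_iff] at h3
    have := Nat.le_of_dvd (by omega) h3
    omega
  have hzm1 : z ≠ -1 := by
    intro h
    have h := congrArg Units.val h
    rw [hz, Units.val_neg, Units.val_one] at h
    have h3 : (((2 * b + 2 : ℕ)) : ZMod l) = 0 := by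
      rw [hb] at h; push_cast at h ⊢; linear_combination h
    rw [ZMod.natCast_eq_zero_iff] at h3
    have := Nat.le_of_dvd (by omega) h3
    omega
  have hzz : z ≠ -z := by
    intro h
    apply h11
    have := congrArg (fun t => t * z⁻¹) h
    simpa using this
  rw [this, Set.ncard_insert_of_notMem, Set.ncard_insert_of_notMem, Set.ncard_pair hzz]
  · simp only [Set.mem_insert_iff, Set.mem_singleton_iff, not_or]
    refine ⟨hzm1.symm, ?_⟩
    intro h
    exact hz1 (neg_injective h).symm
  · simp only [Set.mem_insert_iff, Set.mem_singleton_iff, not_or]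
    refine ⟨h11, hz1.symm, ?_⟩
    intro h
    apply hzm1
    rw [h, neg_neg]

lemma card_G_mul (p e b l : ℕ) (hp : p.Prime) (hb : p = 2 * b + 1) (hb2 : 2 ≤ b) (he : 1 ≤ e)
    (hl : l = p ^ (e - 1) * (2 * (b * (b + 1)))) (G : Set (ZMod (p ^ e) → ZMod (p ^ e)))
    (hG : G = {f : ZMod (p ^ e) → ZMod (p ^ e) | ∃ k : ℕ, 0 < k ∧ Nat.gcd k l = 1 ∧
      ∀ u : ZMod (p ^ e), f u = Polynomial.eval u (Polynomial.dickson 1 1 k)}) :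
    Nat.card (dkHom p e b l hp hb he hl).toHomUnits.ker * Nat.card G = Nat.totient l := by
  have hbig := l_big p e b l hp hb2 hl
  have hlz : NeZero l := ⟨by omega⟩
  have hGr : G = (fun x : (Function.End (ZMod (p ^ e)))ˣ => (x : Function.End (ZMod (p ^ e)))) ''
      ((dkHom p e b l hp hb he hl).toHomUnits.range : Set _) := by
    rw [hG]
    ext f
    constructor
    · rintro ⟨k, hk, hkl, hf⟩
      refine ⟨_, ⟨ZMod.unitOfCoprime k hkl, rfl⟩, ?_⟩
      funext u
      rw [hf u]
      change eval u (dickson 1 (1 : ZMod (p ^ e)) ((k : ℕ) : ZMod l).val) = _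
      rw [ZMod.val_natCast, ← dk_period p e b l hp hb he hl k (k % l) (Nat.mod_le _ _)
        (Or.inl (Nat.dvd_sub_mod _)) u]
    · rintro ⟨_, ⟨a, rfl⟩, rfl⟩
      exact ⟨(a : ZMod l).val, ker_val_pos p e b l hp hb2 hl a, ZMod.val_coe_unit_coprime a,
        fun u => rfl⟩
  have h1 : Nat.card G = Nat.card (dkHom p e b l hp hb he hl).toHomUnits.range := by
    rw [hGr]
    exact Nat.card_image_of_injective
      (f := fun x : (Function.End (ZMod (p ^ e)))ˣ => (x : Function.End (ZMod (p ^ e))))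
      (fun a b h => Units.ext h) _
  rw [h1, ← Subgroup.index_ker, Subgroup.card_mul_index, Nat.card_eq_fintype_card,
    ZMod.card_units_eq_totient]

theorem card_dickson_permutation_group_odd_prime_pow
    (p : ℕ) (hp : p.Prime) (hp5 : 5 ≤ p) (e : ℕ) (he : 1 ≤ e)
    (l : ℕ) (hl : l = p ^ (e - 1) * ((p ^ 2 - 1) / 2))
    (G : Set (ZMod (p ^ e) → ZMod (p ^ e)))
    (hG : G = {f : ZMod (p ^ e) → ZMod (p ^ e) | ∃ k : ℕ, 0 < k ∧ Nat.gcd k l = 1 ∧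
      ∀ u : ZMod (p ^ e), f u = Polynomial.eval u (Polynomial.dickson 1 1 k)}) :
    (e = 1 → Nat.card G = Nat.totient l / 4 ∧
      Nat.card G = Nat.totient ((p ^ 2 - 1) / 2) / 4) ∧
    (1 < e → Nat.card G = Nat.totient l / 2 ∧
      Nat.card G = p ^ (e - 2) * (p - 1) / 2 * Nat.totient ((p ^ 2 - 1) / 2)) := by
  obtain ⟨b, hb⟩ : ∃ b, p = 2 * b + 1 := hp.odd_of_ne_two (by omega)
  have hb2 : 2 ≤ b := by omega
  have hL : (p ^ 2 - 1) / 2 = 2 * (b * (b + 1)) := by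
    have : p ^ 2 - 1 = 2 * (2 * (b * (b + 1))) := by
      rw [hb, show (2 * b + 1) ^ 2 = 2 * (2 * (b * (b + 1))) + 1 by ring]; simp
    rw [this]; simp
  rw [hL] at hl ⊢
  have key := card_G_mul p e b l hp hb hb2 he hl G hG
  constructor
  · intro he1
    rw [card_ker_one p e b l hp hb hb2 he hl he1] at key
    have hll : l = 2 * (b * (b + 1)) := by rw [hl, he1]; simp
    rw [← hll]
    omega
  · intro he1
    rw [card_ker_gt p e b l hp hb hb2 he hl he1] at key
    refine ⟨by omega, ?_⟩
    rw [hl, Nat.totient_mul ((coprime_aux p b hp hb hb2).pow_left (e - 1)),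
      Nat.totient_prime_pow hp (by omega)] at key
    have hp1 : p - 1 = 2 * b := by omega
    rw [hp1] at key ⊢
    rw [show e - 1 - 1 = e - 2 by omega] at key
    rw [show p ^ (e - 2) * (2 * b) = 2 * (p ^ (e - 2) * b) by ring] at key ⊢
    rw [Nat.mul_div_cancel_left _ (by norm_num)]
    apply Nat.eq_of_mul_eq_mul_left (show 0 < 2 by norm_num)
    rw [key]; ring
end
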